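/- Outer bound for fully quantum distributed compression: let φ^{ABR} be a pure state on A⊗B⊗R. If a rate pair (Q_A, Q_B) of nonnegative reals is achievable for φ, then Q_A ≥ ½ I(A;R)_φ, Q_B ≥ ½ I(B;R)_φ, and Q_A + Q_B ≥ ½ J(A;B)_φ − E_sq(φ^{AB}). -/

import Mathlib

open Matrix
open scoped ComplexOrder

open Classical in
/-- Von Neumann entropy `H(M) = −Tr[M log₂ M]`, via eigenvalues (with `0 log 0 = 0`). -/
noncomputable def vnEntropy {n : Type*} [Fintype n] [DecidableEq n] (M : Matrix n n ℂ) : ℝ :=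
  if h : M.IsHermitian then ∑ i, -(h.eigenvalues i * Real.logb 2 (h.eigenvalues i)) else 0

/-- Reduced state on `A` of a state vector on `A ⊗ (B × R)`. -/
noncomputable def redA {ιA ιB ιR : Type} [Fintype ιB] [Fintype ιR]
    (v : ιA × (ιB × ιR) → ℂ) : Matrix ιA ιA ℂ :=
  Matrix.of fun a a' => ∑ q : ιB × ιR, v (a, q) * star (v (a', q))

/-- Reduced state on `R` of a state vector on `A ⊗ (B × R)`. -/
noncomputable def redR {ιA ιB ιR : Type} [Fintype ιA] [Fintype ιB]
    (v : ιA × (ιB × ιR) → ℂ) : Matrix ιR ιR ℂ :=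
  Matrix.of fun r r' => ∑ a : ιA, ∑ b : ιB, v (a, (b, r)) * star (v (a, (b, r')))

/-- Reduced state on `A ⊗ R` of a state vector on `A ⊗ (B × R)`. -/
noncomputable def redAR {ιA ιB ιR : Type} [Fintype ιB]
    (v : ιA × (ιB × ιR) → ℂ) : Matrix (ιA × ιR) (ιA × ιR) ℂ :=
  Matrix.of fun p q => ∑ b : ιB, v (p.1, (b, p.2)) * star (v (q.1, (b, q.2)))

/-- The `n`-copy state vector `|φ⟩^{⊗n}` of `φ` on `A ⊗ (B × R)`, written on
`R^{⊗n} ⊗ (A^{⊗n} ⊗ B^{⊗n})`. -/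
noncomputable def iidVec {ιA ιB ιR : Type} (φ : ιA × (ιB × ιR) → ℂ) (n : ℕ) :
    (Fin n → ιR) × ((Fin n → ιA) × (Fin n → ιB)) → ℂ :=
  fun p => ∏ k : Fin n, φ (p.2.1 k, (p.2.2 k, p.1 k))

/-- The global isometry `I_{R^n} ⊗ (D ∘ (E_A ⊗ E_B))` of a distributed compression code,
with the output ordered as `(R^n × (Â × B̂)) × ((W_A × W_B) × W_C)`. -/
noncomputable def codeMap {ιA ιB ιR : Type} {n : ℕ} {γA ωA γB ωB ωC : Type}
    [Fintype γA] [Fintype γB] [Fintype ιR] [DecidableEq ιR]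
    (EA : Matrix (γA × ωA) (Fin n → ιA) ℂ)
    (EB : Matrix (γB × ωB) (Fin n → ιB) ℂ)
    (D : Matrix (((Fin n → ιA) × (Fin n → ιB)) × ωC) (γA × γB) ℂ) :
    Matrix (((Fin n → ιR) × ((Fin n → ιA) × (Fin n → ιB))) × ((ωA × ωB) × ωC))
      ((Fin n → ιR) × ((Fin n → ιA) × (Fin n → ιB))) ℂ :=
  Matrix.of fun p q =>
    if p.1.1 = q.1 then
      ∑ cA : γA, ∑ cB : γB,
        D (p.1.2, p.2.2) (cA, cB) * EA (cA, p.2.1.1) q.2.1 * EB (cB, p.2.1.2) q.2.2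
    else 0

/-- The fidelity `F = ⟨ψ'| Tr_{W_AW_BW_C}[(I ⊗ D∘(E_A⊗E_B)) ψ' (…)†] |ψ'⟩` of a
distributed compression code on `n` copies of `φ`, where `|ψ'⟩ = |φ⟩^{⊗n}`. -/
noncomputable def codeFidelity {ιA ιB ιR : Type} {n : ℕ} {γA ωA γB ωB ωC : Type}
    [Fintype ιA] [Fintype ιB] [Fintype ιR] [DecidableEq ιR]
    [Fintype γA] [Fintype γB] [Fintype ωA] [Fintype ωB] [Fintype ωC]
    (φ : ιA × (ιB × ιR) → ℂ)
    (EA : Matrix (γA × ωA) (Fin n → ιA) ℂ)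
    (EB : Matrix (γB × ωB) (Fin n → ιB) ℂ)
    (D : Matrix (((Fin n → ιA) × (Fin n → ιB)) × ωC) (γA × γB) ℂ) : ℝ :=
  (star (iidVec φ n) ⬝ᵥ
    (Matrix.of fun i j : (Fin n → ιR) × ((Fin n → ιA) × (Fin n → ιB)) =>
        ∑ w : (ωA × ωB) × ωC,
          (codeMap (ιR := ιR) EA EB D *
              Matrix.vecMulVec (iidVec φ n) (star (iidVec φ n)) *
              (codeMap (ιR := ιR) EA EB D)ᴴ) (i, w) (j, w)).mulVec
      (iidVec φ n)).re

/-- Reduced state on `A ⊗ B` of a state vector on `A ⊗ (B × R)`. -/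
noncomputable def redAB {ιA ιB ιR : Type} [Fintype ιR]
    (v : ιA × (ιB × ιR) → ℂ) : Matrix (ιA × ιB) (ιA × ιB) ℂ :=
  Matrix.of fun p q => ∑ r : ιR, v (p.1, (p.2, r)) * star (v (q.1, (q.2, r)))

/-- Reduced state on `B` of a state vector on `A ⊗ (B × R)`. -/
noncomputable def redB {ιA ιB ιR : Type} [Fintype ιA] [Fintype ιR]
    (v : ιA × (ιB × ιR) → ℂ) : Matrix ιB ιB ℂ :=
  Matrix.of fun b b' => ∑ a : ιA, ∑ r : ιR, v (a, (b, r)) * star (v (a, (b', r)))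

/-- Reduced state on `B ⊗ R` of a state vector on `A ⊗ (B × R)`. -/
noncomputable def redBR {ιA ιB ιR : Type} [Fintype ιA]
    (v : ιA × (ιB × ιR) → ℂ) : Matrix (ιB × ιR) (ιB × ιR) ℂ :=
  Matrix.of fun p q => ∑ a : ιA, v (a, (p.1, p.2)) * star (v (a, (q.1, q.2)))

/-- A rate pair `(Q_A, Q_B)` is achievable for the source `φ^{ABR}` if for every `ε > 0`
there is `N` such that for every `n ≥ N` there is a distributed compression code on `n`
copies of `φ` (isometric encoders `E_A : A^{⊗n} → C_A ⊗ W_A`, `E_B : B^{⊗n} → C_B ⊗ W_B`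
and an isometric decoder `D : C_A ⊗ C_B → Â ⊗ B̂ ⊗ W_C`) with `log₂ d_{C_A} ≤ n Q_A`,
`log₂ d_{C_B} ≤ n Q_B`, and fidelity at least `1 − ε`. -/
noncomputable def achievable {ιA ιB ιR : Type}
    [Fintype ιA] [DecidableEq ιA] [Fintype ιB] [DecidableEq ιB]
    [Fintype ιR] [DecidableEq ιR]
    (φ : ιA × (ιB × ιR) → ℂ) (QA QB : ℝ) : Prop :=
  ∀ ε : ℝ, 0 < ε → ∃ N : ℕ, ∀ n : ℕ, N ≤ n →
    ∃ (dCA dWA dCB dWB dWC : ℕ)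
      (EA : Matrix (Fin dCA × Fin dWA) (Fin n → ιA) ℂ)
      (EB : Matrix (Fin dCB × Fin dWB) (Fin n → ιB) ℂ)
      (D : Matrix (((Fin n → ιA) × (Fin n → ιB)) × Fin dWC) (Fin dCA × Fin dCB) ℂ),
      EAᴴ * EA = 1 ∧ EBᴴ * EB = 1 ∧ Dᴴ * D = 1 ∧
      Real.logb 2 dCA ≤ (n : ℝ) * QA ∧ Real.logb 2 dCB ≤ (n : ℝ) * QB ∧
      1 - ε ≤ codeFidelity φ EA EB D

/-- Reduced state on `A ⊗ E` of a density operator on `(A × B) × E`. -/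
noncomputable def extRedAE {ιA ιB ιE : Type} [Fintype ιB]
    (ρ : Matrix ((ιA × ιB) × ιE) ((ιA × ιB) × ιE) ℂ) : Matrix (ιA × ιE) (ιA × ιE) ℂ :=
  Matrix.of fun p q => ∑ b : ιB, ρ ((p.1, b), p.2) ((q.1, b), q.2)

/-- Reduced state on `B ⊗ E` of a density operator on `(A × B) × E`. -/
noncomputable def extRedBE {ιA ιB ιE : Type} [Fintype ιA]
    (ρ : Matrix ((ιA × ιB) × ιE) ((ιA × ιB) × ιE) ℂ) : Matrix (ιB × ιE) (ιB × ιE) ℂ :=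
  Matrix.of fun p q => ∑ a : ιA, ρ ((a, p.1), p.2) ((a, q.1), q.2)

/-- Reduced state on `E` of a density operator on `(A × B) × E`. -/
noncomputable def extRedE {ιA ιB ιE : Type} [Fintype ιA] [Fintype ιB]
    (ρ : Matrix ((ιA × ιB) × ιE) ((ιA × ιB) × ιE) ℂ) : Matrix ιE ιE ℂ :=
  Matrix.of fun e e' => ∑ ab : ιA × ιB, ρ (ab, e) (ab, e')

/-- Squashed entanglement `E_sq(φ^{AB}) = inf ½ I(A;B|E)_ρ`, the infimum over all
finite-dimensional extensions `ρ^{ABE}` of `φ^{AB}`, where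
`I(A;B|E) = H(AE) + H(BE) − H(ABE) − H(E)`. -/
noncomputable def squashedEntanglement {ιA ιB : Type}
    [Fintype ιA] [DecidableEq ιA] [Fintype ιB] [DecidableEq ιB]
    (φAB : Matrix (ιA × ιB) (ιA × ιB) ℂ) : ℝ :=
  sInf { x : ℝ |
    ∃ (dE : ℕ) (ρ : Matrix ((ιA × ιB) × Fin dE) ((ιA × ιB) × Fin dE) ℂ),
      ρ.PosSemidef ∧ ρ.trace = 1 ∧
      (∀ i j : ιA × ιB, (∑ e : Fin dE, ρ (i, e) (j, e)) = φAB i j) ∧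
      x = (1/2) * (vnEntropy (extRedAE ρ) + vnEntropy (extRedBE ρ)
            - vnEntropy ρ - vnEntropy (extRedE ρ)) }

/-!
The systems after encoding are the codes `C_A`, `C_B`, the wastes `W_A`, `W_B` and the reference,
which is split into two parts `E` and `F`. If the fidelity is close to one, the decoder output and
the reference are together close to the pure state `φ^{⊗n}`, so the wastes are nearly independent of
the reference. Removing `C_A` from `C_A W_A` lowers the mutual information with the reference by at
most `2 log₂ d_{C_A}`, hence `I(A^n;R^n) ≤ 2 log₂ d_{C_A} + o(n)`. For the sum of the rates,
`H(W_A) + H(W_B) - H(W_A W_B) ≤ I(W_A;W_B|E^n) + o(n) ≤ I(A^n;B^n|E^n) + o(n)`, because local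
operations do not increase the conditional mutual information; with
`H(A^n) ≤ log₂ d_{C_A} + H(W_A)`, its analogue for `B`, and
`H(W_A W_B R^n) ≤ log₂ d_{C_A} + log₂ d_{C_B}` this gives
`H(A) + H(B) + H(R) - I(A;B|E) ≤ 2 (Q_A + Q_B)`. Finally, the fidelity depends only on `φ^{AB}`, so
`φ` may be replaced by a purification of any extension `ρ^{ABE}` of `φ^{AB}`, and the infimum over
the extensions is the squashed entanglement.
-/

/-! ### Entropy of density matrices -/

/-- The summand `-x log₂ x` of the entropy of a probability distribution. -/
noncomputable def entropyTerm (x : ℝ) : ℝ := -(x * Real.logb 2 x)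

@[simp]
lemma entropyTerm_zero : entropyTerm 0 = 0 := by simp [entropyTerm]

lemma entropyTerm_mul (x y : ℝ) :
    entropyTerm (x * y) = y * entropyTerm x + x * entropyTerm y := by
  have h := Real.negMulLog_mul x y
  simp only [Real.negMulLog] at h
  simp only [entropyTerm, Real.logb]
  linear_combination h / Real.log 2

lemma sum_entropyTerm_mul {S T : Type*} [Fintype S] [Fintype T] {p : S → ℝ} {q : T → ℝ}
    (hp : ∑ i, p i = 1) (hq : ∑ j, q j = 1) :
    ∑ x : S × T, entropyTerm (p x.1 * q x.2) = ∑ i, entropyTerm (p i) + ∑ j, entropyTerm (q j) := by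
  simp only [entropyTerm_mul, Finset.sum_add_distrib, Fintype.sum_prod_type, ← Finset.sum_mul,
    ← Finset.mul_sum, hp, hq, one_mul]

lemma gibbs_inequality {S : Type*} [Fintype S] {p q : S → ℝ} (hp : ∀ i, 0 ≤ p i)
    (hq : ∀ i, 0 < q i) (hqp : ∑ i, q i ≤ ∑ i, p i) :
    ∑ i, entropyTerm (p i) ≤ ∑ i, -(p i * Real.logb 2 (q i)) := by
  have log_two_pos : 0 < Real.log 2 := Real.log_pos one_lt_two
  have termwise (i : S) :
      entropyTerm (p i) ≤ -(p i * Real.logb 2 (q i)) + (q i - p i) / Real.log 2 := by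
    rcases (hp i).eq_or_lt with h | h
    · simpa [← h] using div_nonneg (hq i).le log_two_pos.le
    · have hlog : p i * (Real.log (q i) - Real.log (p i)) ≤ q i - p i :=
        calc p i * (Real.log (q i) - Real.log (p i)) = p i * Real.log (q i / p i) := by
              rw [Real.log_div (hq i).ne' h.ne']
          _ ≤ p i * (q i / p i - 1) :=
              mul_le_mul_of_nonneg_left (Real.log_le_sub_one_of_pos (div_pos (hq i) h)) h.le
          _ = q i - p i := by field_simp
      have := div_le_div_of_nonneg_right hlog log_two_pos.le
      simp only [entropyTerm, Real.logb]
      linear_combination this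
  have defect_nonpos : (∑ i, q i - ∑ i, p i) / Real.log 2 ≤ 0 :=
    div_nonpos_of_nonpos_of_nonneg (sub_nonpos.2 hqp) log_two_pos.le
  calc ∑ i, entropyTerm (p i)
      ≤ ∑ i, (-(p i * Real.logb 2 (q i)) + (q i - p i) / Real.log 2) :=
        Finset.sum_le_sum fun i _ => termwise i
    _ = ∑ i, -(p i * Real.logb 2 (q i)) + (∑ i, q i - ∑ i, p i) / Real.log 2 := by
        rw [Finset.sum_add_distrib, ← Finset.sum_div, Finset.sum_sub_distrib]
    _ ≤ ∑ i, -(p i * Real.logb 2 (q i)) := by linarith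

lemma nonempty_of_sum_eq_one {S : Type*} [Fintype S] {p : S → ℝ} (hp : ∑ i, p i = 1) :
    Nonempty S := by
  by_contra h
  rw [not_nonempty_iff] at h
  simp at hp

lemma sum_entropyTerm_le_logb_card {S : Type*} [Fintype S] {p : S → ℝ} (hp : ∀ i, 0 ≤ p i)
    (hp1 : ∑ i, p i = 1) : ∑ i, entropyTerm (p i) ≤ Real.logb 2 (Fintype.card S) := by
  have := nonempty_of_sum_eq_one hp1
  refine (gibbs_inequality (q := fun _ => (Fintype.card S : ℝ)⁻¹) hp
    (fun _ => by positivity) (by simp [hp1])).trans ?_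
  simp only [Real.logb_inv, mul_neg, neg_neg, ← Finset.sum_mul, hp1, one_mul, le_refl]

lemma fano_inequality {S : Type*} [Fintype S] {p : S → ℝ} (hp : ∀ i, 0 ≤ p i)
    (hp1 : ∑ i, p i = 1) {ε : ℝ} {i₀ : S} (hi₀ : 1 - ε ≤ p i₀) :
    ∑ i, entropyTerm (p i) ≤ 1 + ε * Real.logb 2 (Fintype.card S) := by
  classical
  have := nonempty_of_sum_eq_one hp1
  set d : ℝ := (Fintype.card S : ℝ) with hd
  have one_le_d : 1 ≤ d := Nat.one_le_cast.2 Fintype.card_pos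
  have d_pos : 0 < d := by linarith
  -- Compare with the mixture, in equal parts, of the uniform distribution and the mass at `i₀`.
  let q (i : S) : ℝ := (2 * d)⁻¹ + if i = i₀ then 2⁻¹ else 0
  have q_pos (i : S) : 0 < q i := by
    have : 0 < (2 * d)⁻¹ := by positivity
    simp only [q]; split_ifs <;> linarith
  have sum_q : ∑ i, q i = 1 := by
    simp only [q, Finset.sum_add_distrib, Finset.sum_const, Finset.card_univ, nsmul_eq_mul,
      Finset.sum_ite_eq', Finset.mem_univ, if_true, ← hd]
    field_simp
    norm_num
  have logb_inv_two_mul : Real.logb 2 (2 * d)⁻¹ = -(1 + Real.logb 2 d) := by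
    rw [Real.logb_inv, Real.logb_mul two_ne_zero d_pos.ne', Real.logb_self_eq_one one_lt_two]
  have logb_q_self : -1 ≤ Real.logb 2 (q i₀) := by
    rw [show (-1 : ℝ) = Real.logb 2 2⁻¹ by
      rw [Real.logb_inv, Real.logb_self_eq_one one_lt_two]]
    refine Real.logb_le_logb_of_le one_lt_two (by norm_num) ?_
    have : 0 < (2 * d)⁻¹ := by positivity
    simp only [q, if_true]; linarith
  have logb_q (i : S) :
      -(p i * Real.logb 2 (q i)) ≤
        p i * (1 + Real.logb 2 d) - if i = i₀ then p i₀ * Real.logb 2 d else 0 := by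
    split_ifs with h
    · subst h; nlinarith [hp i]
    · simp only [q, h, if_false, add_zero, logb_inv_two_mul]; linarith
  have logb_nonneg : 0 ≤ Real.logb 2 d := Real.logb_nonneg one_lt_two one_le_d
  calc ∑ i, entropyTerm (p i) ≤ ∑ i, -(p i * Real.logb 2 (q i)) :=
        gibbs_inequality hp q_pos (sum_q.trans hp1.symm).le
    _ ≤ ∑ i, (p i * (1 + Real.logb 2 d) - if i = i₀ then p i₀ * Real.logb 2 d else 0) :=
        Finset.sum_le_sum fun i _ => logb_q i
    _ = 1 + (1 - p i₀) * Real.logb 2 d := by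
        rw [Finset.sum_sub_distrib, ← Finset.sum_mul, hp1,
          Finset.sum_ite_eq' Finset.univ i₀ fun _ => p i₀ * Real.logb 2 d,
          if_pos (Finset.mem_univ i₀)]
        ring
    _ ≤ 1 + ε * Real.logb 2 d := by nlinarith

section Spectrum

variable {m n : Type*} [Fintype m] [DecidableEq m] [Fintype n] [DecidableEq n]

lemma vnEntropy_eq_sum_eigenvalues {M : Matrix n n ℂ} (hM : M.IsHermitian) :
    vnEntropy M = ∑ i, entropyTerm (hM.eigenvalues i) :=
  dif_pos hM

lemma vnEntropy_eq_sum_roots {M : Matrix n n ℂ} (hM : M.IsHermitian) :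
    vnEntropy M = (M.charpoly.roots.map fun z : ℂ => entropyTerm z.re).sum := by
  rw [hM.roots_charpoly_eq_eigenvalues, vnEntropy_eq_sum_eigenvalues hM, Multiset.map_map]
  simp

/-- `A * B` and `B * A` have the same nonzero eigenvalues. -/
lemma sum_map_roots_charpoly_mul_comm (A : Matrix m n ℂ) (B : Matrix n m ℂ) {g : ℂ → ℝ}
    (hg : g 0 = 0) :
    ((A * B).charpoly.roots.map g).sum = ((B * A).charpoly.roots.map g).sum := by
  have h := congrArg (fun p : Polynomial ℂ => (p.roots.map g).sum) (charpoly_mul_comm' A B)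
  have ne_zero {k : ℕ} {p : Polynomial ℂ} (hp : p.Monic) : Polynomial.X ^ k * p ≠ 0 :=
    mul_ne_zero (pow_ne_zero _ Polynomial.X_ne_zero) hp.ne_zero
  rw [Polynomial.roots_mul (ne_zero (charpoly_monic _)),
    Polynomial.roots_mul (ne_zero (charpoly_monic _))] at h
  simpa [hg, Multiset.map_nsmul, Multiset.sum_nsmul] using h

lemma exists_unitary_diagonalization {M : Matrix n n ℂ} (hM : M.IsHermitian) :
    ∃ U : Matrix n n ℂ, Uᴴ * U = 1 ∧ U * Uᴴ = 1 ∧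
      M = U * diagonal (fun i => (hM.eigenvalues i : ℂ)) * Uᴴ := by
  refine ⟨hM.eigenvectorUnitary, ?_, ?_, ?_⟩
  · simpa [star_eq_conjTranspose] using Unitary.coe_star_mul_self hM.eigenvectorUnitary
  · simpa [star_eq_conjTranspose] using Unitary.coe_mul_star_self hM.eigenvectorUnitary
  · have := hM.spectral_theorem
    rw [Unitary.conjStarAlgAut_apply] at this
    simpa [star_eq_conjTranspose, Function.comp_def] using this

lemma vnEntropy_unitary_conj_diagonal {U : Matrix n n ℂ} (hU : Uᴴ * U = 1) (p : n → ℝ) :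
    vnEntropy (U * diagonal (fun i => (p i : ℂ)) * Uᴴ) = ∑ i, entropyTerm (p i) := by
  have hermitian : (U * diagonal (fun i => (p i : ℂ)) * Uᴴ).IsHermitian := by
    refine isHermitian_mul_mul_conjTranspose _ ?_
    rw [IsHermitian, diagonal_conjTranspose]
    congr 1; ext i; simp
  rw [vnEntropy_eq_sum_roots hermitian, charpoly_mul_comm, ← mul_assoc, hU, one_mul,
    charpoly_diagonal,
    Polynomial.roots_prod _ _ (by simp [Finset.prod_ne_zero_iff, Polynomial.X_sub_C_ne_zero])]
  simp

lemma sum_eigenvalues_eq_one {M : Matrix n n ℂ} (hM : M.IsHermitian) (hM1 : M.trace = 1) :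
    ∑ i, hM.eigenvalues i = 1 := by
  refine Complex.ofReal_injective ?_
  rw [Complex.ofReal_sum, Complex.ofReal_one, ← hM1]
  exact hM.trace_eq_sum_eigenvalues.symm

lemma vnEntropy_le_logb_card {M : Matrix n n ℂ} (hM : M.PosSemidef) (hM1 : M.trace = 1) :
    vnEntropy M ≤ Real.logb 2 (Fintype.card n) := by
  rw [vnEntropy_eq_sum_eigenvalues hM.1]
  exact sum_entropyTerm_le_logb_card hM.eigenvalues_nonneg (sum_eigenvalues_eq_one hM.1 hM1)

lemma exists_le_eigenvalues {M : Matrix n n ℂ} (hM : M.IsHermitian) {ψ : n → ℂ}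
    (hψ : star ψ ⬝ᵥ ψ = 1) : ∃ i, (star ψ ⬝ᵥ (M *ᵥ ψ)).re ≤ hM.eigenvalues i := by
  have : Nonempty n := by
    by_contra h
    rw [not_nonempty_iff] at h
    simp [dotProduct] at hψ
  obtain ⟨i, -, hi⟩ := Finset.exists_max_image Finset.univ hM.eigenvalues Finset.univ_nonempty
  refine ⟨i, ?_⟩
  obtain ⟨U, -, hU, hMU⟩ := exists_unitary_diagonalization hM
  have gap_posSemidef : ((hM.eigenvalues i : ℂ) • 1 - M).PosSemidef := by
    have : (hM.eigenvalues i : ℂ) • 1 - M =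
        U * diagonal (fun j => (hM.eigenvalues i : ℂ) - hM.eigenvalues j) * Uᴴ := by
      rw [← diagonal_sub, mul_sub, sub_mul, ← hMU, ← smul_one_eq_diagonal, mul_smul_comm, mul_one,
        smul_mul_assoc, hU]
    rw [this]
    refine PosSemidef.mul_mul_conjTranspose_same (posSemidef_diagonal_iff.2 fun j => ?_) U
    rw [← Complex.ofReal_sub]
    exact_mod_cast sub_nonneg.2 (hi j (Finset.mem_univ j))
  have := gap_posSemidef.re_dotProduct_nonneg ψ
  rw [sub_mulVec, dotProduct_sub, smul_mulVec, one_mulVec, dotProduct_smul, hψ] at this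
  simpa using this

lemma vnEntropy_le_of_one_sub_le_fidelity {M : Matrix n n ℂ} (hM : M.PosSemidef)
    (hM1 : M.trace = 1) {ψ : n → ℂ} (hψ : star ψ ⬝ᵥ ψ = 1) {ε : ℝ}
    (hε : 1 - ε ≤ (star ψ ⬝ᵥ (M *ᵥ ψ)).re) :
    vnEntropy M ≤ 1 + ε * Real.logb 2 (Fintype.card n) := by
  obtain ⟨i, hi⟩ := exists_le_eigenvalues hM.1 hψ
  rw [vnEntropy_eq_sum_eigenvalues hM.1]
  exact fano_inequality hM.eigenvalues_nonneg (sum_eigenvalues_eq_one hM.1 hM1)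
    (hε.trans hi)

end Spectrum

/-! ### Monotonicity of the relative entropy -/

/-- The classical data of a pair `(ρ, σ)` of positive operators: the eigenvalues `p` of `ρ` and `q`
of `σ`, and the squared overlaps `w i j = |⟨uᵢ, vⱼ⟩|²` of their eigenbases. The last field says that
the kernel of `σ` is contained in the kernel of `ρ`. -/
structure OverlapData (I J : Type*) [Fintype J] where
  p : I → ℝ
  q : J → ℝ
  w : I → J → ℝ
  p_nonneg : ∀ i, 0 ≤ p i
  q_nonneg : ∀ j, 0 ≤ q j
  sum_w : ∀ i, ∑ j, w i j = 1
  support : ∀ i j, q j = 0 → p i * w i j = 0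

namespace OverlapData

variable {I J : Type*} [Fintype I] [Fintype J]

/-- The relative entropy `Tr ρ (ln ρ - ln σ)`. -/
noncomputable def relEntropy (d : OverlapData I J) : ℝ :=
  ∑ i, d.p i * Real.log (d.p i) - ∑ i, ∑ j, d.w i j * d.p i * Real.log (d.q j)

/-- The function `∑ w p² / (q + t p)` of `t`, whose integral over `(0, ∞)` is, up to normalization,
the relative entropy. -/
noncomputable def resolvent (d : OverlapData I J) (t : ℝ) : ℝ :=
  ∑ i, ∑ j, d.w i j * (d.p i ^ 2 / (d.q j + t * d.p i))

/-- A primitive of `OverlapData.resolvent`. -/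
noncomputable def primitive (d : OverlapData I J) (t : ℝ) : ℝ :=
  ∑ i, ∑ j, d.w i j * d.p i * Real.log (d.q j + t * d.p i)

lemma hasDerivAt_primitive (d : OverlapData I J) {t : ℝ} (ht : 0 ≤ t) :
    HasDerivAt d.primitive (d.resolvent t) t := by
  refine HasDerivAt.fun_sum fun i _ => HasDerivAt.fun_sum fun j _ => ?_
  rcases (d.q_nonneg j).eq_or_lt with hq | hq
  · have hpw : d.w i j * d.p i = 0 := (mul_comm _ _).trans (d.support i j hq.symm)
    have : d.w i j * (d.p i ^ 2 / (d.q j + t * d.p i)) = 0 := by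
      rw [sq, mul_div_assoc, ← mul_assoc, hpw, zero_mul]
    simpa only [hpw, zero_mul, this] using hasDerivAt_const t (0 : ℝ)
  · have hpos : 0 < d.q j + t * d.p i := by
      have := mul_nonneg ht (d.p_nonneg i)
      linarith
    have affine : HasDerivAt (fun s : ℝ => d.q j + s * d.p i) (d.p i) t := by
      simpa using ((hasDerivAt_id t).mul_const (d.p i)).const_add (d.q j)
    exact ((affine.log hpos.ne').const_mul (d.w i j * d.p i)).congr_deriv (by ring)

lemma tendsto_primitive_sub_log (d : OverlapData I J) :
    Filter.Tendsto (fun t => d.primitive t - (∑ i, d.p i) * Real.log t) Filter.atTop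
      (nhds (∑ i, d.p i * Real.log (d.p i))) := by
  have sum_w_mul (i : I) (c : ℝ) : d.p i * c = ∑ j, d.w i j * d.p i * c := by
    rw [← Finset.sum_mul, ← Finset.sum_mul, d.sum_w, one_mul]
  have rescale (t : ℝ) (ht : 0 < t) : d.primitive t - (∑ i, d.p i) * Real.log t
      = ∑ i, ∑ j, d.w i j * d.p i * Real.log (d.q j * t⁻¹ + d.p i) := by
    rw [primitive, Finset.sum_mul, ← Finset.sum_sub_distrib]
    refine Finset.sum_congr rfl fun i _ => ?_
    rw [sum_w_mul, ← Finset.sum_sub_distrib]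
    refine Finset.sum_congr rfl fun j _ => ?_
    rcases (d.p_nonneg i).eq_or_lt with h | h
    · simp [← h]
    · have hpos : 0 < d.q j * t⁻¹ + d.p i := by
        have := mul_nonneg (d.q_nonneg j) (inv_nonneg.2 ht.le)
        linarith
      rw [show d.q j + t * d.p i = t * (d.q j * t⁻¹ + d.p i) by field_simp,
        Real.log_mul ht.ne' hpos.ne']
      ring
  have limit : ∑ i, d.p i * Real.log (d.p i) =
      ∑ i, ∑ j, d.w i j * d.p i * Real.log (d.q j * 0 + d.p i) :=
    Finset.sum_congr rfl fun i _ => by simp only [mul_zero, zero_add, ← sum_w_mul]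
  rw [limit]
  refine Filter.Tendsto.congr'
    (Filter.eventually_gt_atTop 0 |>.mono fun t ht => (rescale t ht).symm) ?_
  refine tendsto_finsetSum _ fun i _ => tendsto_finsetSum _ fun j _ => ?_
  rcases (d.p_nonneg i).eq_or_lt with h | h
  · simp [← h]
  · refine Filter.Tendsto.const_mul _ (Filter.Tendsto.log ?_ (by simpa using h.ne'))
    exact (tendsto_inv_atTop_zero.const_mul _).add_const _

/-- Integrate the inequality of resolvents over `(0, t)` and let `t → ∞`. -/
lemma relEntropy_le_of_resolvent_le {I' J' : Type*} [Fintype I'] [Fintype J']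
    {d : OverlapData I J} {d' : OverlapData I' J'} (hp : ∑ i, d.p i = ∑ i, d'.p i)
    (h : ∀ t, 0 < t → d'.resolvent t ≤ d.resolvent t) : d'.relEntropy ≤ d.relEntropy := by
  have deriv {t : ℝ} (ht : 0 ≤ t) := (d.hasDerivAt_primitive ht).sub (d'.hasDerivAt_primitive ht)
  have mono : MonotoneOn (d.primitive - d'.primitive) (Set.Ici 0) := by
    refine monotoneOn_of_deriv_nonneg (convex_Ici 0)
      (fun t ht => (deriv ht).continuousAt.continuousWithinAt)
      (fun t ht => (deriv (interior_subset ht)).differentiableAt.differentiableWithinAt) ?_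
    intro t ht
    rw [(deriv (interior_subset ht)).deriv]
    rw [interior_Ici] at ht
    exact sub_nonneg.2 (h t ht)
  have limit := d.tendsto_primitive_sub_log.sub d'.tendsto_primitive_sub_log
  have at_zero_le : d.primitive 0 - d'.primitive 0 ≤
      ∑ i, d.p i * Real.log (d.p i) - ∑ i, d'.p i * Real.log (d'.p i) := by
    refine ge_of_tendsto limit ?_
    filter_upwards [Filter.eventually_ge_atTop 0] with t ht
    have := mono Set.self_mem_Ici ht ht
    simp only [Pi.sub_apply] at this
    rw [hp]
    linarith
  simp only [primitive, zero_mul, add_zero] at at_zero_le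
  simp only [relEntropy]
  linarith

end OverlapData

/-- A pair of positive operators `ρ = U diag(p) Uᴴ` and `σ = V diag(q) Vᴴ`, given by spectral
decompositions, such that the kernel of `σ` is contained in the kernel of `ρ`. -/
structure SpectralPair (n : Type*) [Fintype n] [DecidableEq n] where
  U : Matrix n n ℂ
  V : Matrix n n ℂ
  p : n → ℝ
  q : n → ℝ
  U_isometry : Uᴴ * U = 1
  V_isometry : Vᴴ * V = 1
  p_nonneg : ∀ i, 0 ≤ p i
  q_nonneg : ∀ j, 0 ≤ q j
  support : ∀ j, q j = 0 → (Vᴴ * (U * diagonal (fun i => (p i : ℂ)) * Uᴴ) * V) j j = 0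

/-- For fixed `ρ`, `σ` and `t > 0`, a concave quadratic form in `Y` whose maximum is
`∑ |⟨uᵢ, vⱼ⟩|² pᵢ² / (qⱼ + t pᵢ)`. -/
noncomputable def variationalForm {n : Type*} [Fintype n] (ρ σ : Matrix n n ℂ) (t : ℝ)
    (Y : Matrix n n ℂ) : ℝ :=
  2 * (ρ * Y).trace.re - (σ * (Y * Yᴴ)).trace.re - t * (ρ * (Yᴴ * Y)).trace.re

lemma re_mul_sub_le {p q t : ℝ} (hp : 0 ≤ p) (hq : 0 ≤ q) (ht : 0 < t) (c z : ℂ) :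
    2 * p * (c * z).re - (q + t * p) * ‖z‖ ^ 2 ≤ ‖c‖ ^ 2 * (p ^ 2 / (q + t * p)) := by
  have htp := mul_nonneg ht.le hp
  rcases (add_nonneg hq htp).eq_or_lt with h | h
  · have : p = 0 := (mul_eq_zero.1 (by linarith : t * p = 0)).resolve_left ht.ne'
    rw [← h, this]; simp
  · have hcz : 2 * p * (c * z).re ≤ 2 * p * (‖c‖ * ‖z‖) := by
      rw [← norm_mul]
      exact mul_le_mul_of_nonneg_left (Complex.re_le_norm _) (by linarith)
    have := mul_le_mul_of_nonneg_right hcz h.le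
    rw [mul_div_assoc', le_div_iff₀ h]
    nlinarith [sq_nonneg ((q + t * p) * ‖z‖ - p * ‖c‖)]

lemma re_mul_sub_eq {p q t : ℝ} (hp : 0 ≤ p) (hq : 0 ≤ q) (ht : 0 < t) (c : ℂ) {z : ℂ}
    (hz : z = ((p / (q + t * p) : ℝ) : ℂ) * star c) :
    2 * p * (c * z).re - (q + t * p) * ‖z‖ ^ 2 = ‖c‖ ^ 2 * (p ^ 2 / (q + t * p)) := by
  have re_eq : (c * z).re = p / (q + t * p) * ‖c‖ ^ 2 := by
    rw [hz, mul_left_comm, RCLike.star_def, Complex.mul_conj']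
    norm_cast
  rw [re_eq, hz, norm_mul, norm_star, Complex.norm_real, mul_pow, Real.norm_eq_abs, sq_abs]
  rcases (add_nonneg hq (mul_nonneg ht.le hp)).eq_or_lt with h | _
  · simp [← h]
  · field_simp; ring

section Trace

variable {m n : Type*} [Fintype n]

lemma mul_conjTranspose_self_apply (Z : Matrix m n ℂ) (i : m) :
    (Z * Zᴴ) i i = ((∑ j, ‖Z i j‖ ^ 2 : ℝ) : ℂ) := by
  simp only [mul_apply, conjTranspose_apply, RCLike.star_def, Complex.mul_conj']
  push_cast
  rfl

lemma conjTranspose_mul_self_apply (Z : Matrix n m ℂ) (j : m) :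
    (Zᴴ * Z) j j = ((∑ i, ‖Z i j‖ ^ 2 : ℝ) : ℂ) := by
  simpa using mul_conjTranspose_self_apply Zᴴ j

lemma trace_unitary_conj_diagonal_mul [DecidableEq n] (U X : Matrix n n ℂ) (p : n → ℝ) :
    (U * diagonal (fun i => (p i : ℂ)) * Uᴴ * X).trace.re = ∑ i, p i * ((Uᴴ * X * U) i i).re := by
  rw [Matrix.mul_assoc, Matrix.trace_mul_comm, ← Matrix.mul_assoc, Matrix.trace_mul_comm,
    Matrix.trace]
  simp [diagonal_mul]

end Trace

namespace SpectralPair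

variable {n : Type*} [Fintype n] [DecidableEq n] (P : SpectralPair n)

/-- The first operator of the pair. -/
noncomputable def ρ : Matrix n n ℂ := P.U * diagonal (fun i => (P.p i : ℂ)) * P.Uᴴ

/-- The second operator of the pair. -/
noncomputable def σ : Matrix n n ℂ := P.V * diagonal (fun j => (P.q j : ℂ)) * P.Vᴴ

lemma U_mul_conjTranspose : P.U * P.Uᴴ = 1 := mul_eq_one_comm.1 P.U_isometry

lemma V_mul_conjTranspose : P.V * P.Vᴴ = 1 := mul_eq_one_comm.1 P.V_isometry

lemma trace_ρ : P.ρ.trace = ((∑ i, P.p i : ℝ) : ℂ) := by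
  rw [ρ, trace_mul_comm, ← Matrix.mul_assoc, P.U_isometry, Matrix.one_mul, trace_diagonal,
    Complex.ofReal_sum]

lemma conj_ρ_apply_self (j : n) :
    (P.Vᴴ * P.ρ * P.V) j j = ((∑ i, ‖(P.Uᴴ * P.V) i j‖ ^ 2 * P.p i : ℝ) : ℂ) := by
  have : P.Vᴴ * P.ρ * P.V =
      (P.Uᴴ * P.V)ᴴ * (diagonal (fun i => (P.p i : ℂ)) * (P.Uᴴ * P.V)) := by
    simp only [ρ, conjTranspose_mul, conjTranspose_conjTranspose, Matrix.mul_assoc]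
  rw [this, Matrix.mul_apply]
  push_cast
  refine Finset.sum_congr rfl fun i _ => ?_
  rw [diagonal_mul, conjTranspose_apply, RCLike.star_def, ← Complex.conj_mul']
  ring

/-- The eigenvalues and squared overlaps of the pair. -/
noncomputable def overlapData : OverlapData n n where
  p := P.p
  q := P.q
  w i j := ‖(P.Uᴴ * P.V) i j‖ ^ 2
  p_nonneg := P.p_nonneg
  q_nonneg := P.q_nonneg
  sum_w i := by
    have unitary : (P.Uᴴ * P.V) * (P.Uᴴ * P.V)ᴴ = 1 := by
      rw [conjTranspose_mul, conjTranspose_conjTranspose, Matrix.mul_assoc, ← Matrix.mul_assoc P.V,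
        V_mul_conjTranspose, Matrix.one_mul, P.U_isometry]
    have := mul_conjTranspose_self_apply (P.Uᴴ * P.V) i
    rw [unitary, one_apply_eq] at this
    exact_mod_cast this.symm
  support i j hj := by
    have h := (conj_ρ_apply_self P j).symm.trans (P.support j hj)
    rw [Complex.ofReal_eq_zero, Finset.sum_eq_zero_iff_of_nonneg
      fun i _ => mul_nonneg (sq_nonneg _) (P.p_nonneg i)] at h
    exact (mul_comm _ _).trans (h i (Finset.mem_univ i))

/-- The relative entropy `Tr ρ (ln ρ - ln σ)`. -/
noncomputable def relEntropy : ℝ :=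
  ∑ i, P.p i * Real.log (P.p i) - ∑ j, ((P.Vᴴ * P.ρ * P.V) j j).re * Real.log (P.q j)

lemma relEntropy_overlapData : P.overlapData.relEntropy = P.relEntropy := by
  simp only [relEntropy, OverlapData.relEntropy, overlapData, conj_ρ_apply_self, Complex.ofReal_re,
    Finset.sum_mul]
  rw [Finset.sum_comm]

lemma variationalForm_eq (t : ℝ) (Y : Matrix n n ℂ) :
    variationalForm P.ρ P.σ t Y =
      ∑ i, ∑ j, (2 * P.p i * ((P.Uᴴ * P.V) i j * (P.Vᴴ * Y * P.U) j i).re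
        - (P.q j + t * P.p i) * ‖(P.Vᴴ * Y * P.U) j i‖ ^ 2) := by
  set Z := P.Vᴴ * Y * P.U with hZ
  have conj_Y : P.Uᴴ * Y * P.U = (P.Uᴴ * P.V) * Z := by
    rw [hZ, Matrix.mul_assoc _ P.V, Matrix.mul_assoc P.Vᴴ, ← Matrix.mul_assoc P.V,
      V_mul_conjTranspose, Matrix.one_mul, Matrix.mul_assoc]
  have conj_mul_star : P.Vᴴ * (Y * Yᴴ) * P.V = Z * Zᴴ := by
    calc P.Vᴴ * (Y * Yᴴ) * P.V = P.Vᴴ * (Y * (P.U * P.Uᴴ) * Yᴴ) * P.V := by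
          rw [U_mul_conjTranspose, Matrix.mul_one]
      _ = Z * Zᴴ := by
          simp only [hZ, Matrix.mul_assoc, conjTranspose_mul, conjTranspose_conjTranspose]
  have conj_star_mul : P.Uᴴ * (Yᴴ * Y) * P.U = Zᴴ * Z := by
    calc P.Uᴴ * (Yᴴ * Y) * P.U = P.Uᴴ * (Yᴴ * (P.V * P.Vᴴ) * Y) * P.U := by
          rw [V_mul_conjTranspose, Matrix.mul_one]
      _ = Zᴴ * Z := by
          simp only [hZ, Matrix.mul_assoc, conjTranspose_mul, conjTranspose_conjTranspose]
  simp only [variationalForm, ρ, σ, trace_unitary_conj_diagonal_mul, conj_Y, conj_mul_star,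
    conj_star_mul, mul_conjTranspose_self_apply, conjTranspose_mul_self_apply, Complex.ofReal_re]
  simp only [Matrix.mul_apply (M := P.Uᴴ * P.V), Complex.re_sum, Finset.mul_sum]
  rw [Finset.sum_comm (f := fun j i => P.q j * ‖Z j i‖ ^ 2)]
  simp only [← Finset.sum_sub_distrib]
  exact Finset.sum_congr rfl fun i _ => Finset.sum_congr rfl fun j _ => by ring

lemma isGreatest_resolvent {t : ℝ} (ht : 0 < t) :
    IsGreatest (Set.range (variationalForm P.ρ P.σ t)) (P.overlapData.resolvent t) := by
  constructor
  · let Z : Matrix n n ℂ := Matrix.of fun j i =>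
      ((P.p i / (P.q j + t * P.p i) : ℝ) : ℂ) * star ((P.Uᴴ * P.V) i j)
    have conj_eq : P.Vᴴ * (P.V * Z * P.Uᴴ) * P.U = Z := by
      calc P.Vᴴ * (P.V * Z * P.Uᴴ) * P.U = (P.Vᴴ * P.V) * Z * (P.Uᴴ * P.U) := by
            simp only [Matrix.mul_assoc]
        _ = Z := by rw [P.U_isometry, P.V_isometry, Matrix.one_mul, Matrix.mul_one]
    refine ⟨P.V * Z * P.Uᴴ, ?_⟩
    rw [variationalForm_eq, conj_eq]
    exact Finset.sum_congr rfl fun i _ => Finset.sum_congr rfl fun j _ =>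
      re_mul_sub_eq (P.p_nonneg i) (P.q_nonneg j) ht _ rfl
  · rintro _ ⟨Y, rfl⟩
    rw [variationalForm_eq]
    exact Finset.sum_le_sum fun i _ => Finset.sum_le_sum fun j _ =>
      re_mul_sub_le (P.p_nonneg i) (P.q_nonneg j) ht _ _

/-- A trace-preserving map enters only through the pullback of the test operators `Y'`. -/
lemma relEntropy_le_of_variationalForm {m : Type*} [Fintype m] [DecidableEq m]
    {P : SpectralPair n} {P' : SpectralPair m} (htr : P.ρ.trace = P'.ρ.trace)
    (h : ∀ t Y', ∃ Y, variationalForm P.ρ P.σ t Y = variationalForm P'.ρ P'.σ t Y') :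
    P'.relEntropy ≤ P.relEntropy := by
  rw [← relEntropy_overlapData, ← relEntropy_overlapData]
  rw [trace_ρ, trace_ρ, Complex.ofReal_inj] at htr
  refine OverlapData.relEntropy_le_of_resolvent_le htr fun t ht => ?_
  obtain ⟨Y', hY'⟩ := (P'.isGreatest_resolvent ht).1
  obtain ⟨Y, hY⟩ := h t Y'
  rw [← hY', ← hY]
  exact (P.isGreatest_resolvent ht).2 ⟨Y, rfl⟩

end SpectralPair

/-! ### Strong subadditivity -/

section PartialTrace

open scoped Kronecker

variable {m n l : Type*}

/-- The partial trace over the left tensor factor. -/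
def traceOutLeft [Fintype m] (M : Matrix (m × n) (m × n) ℂ) : Matrix n n ℂ :=
  Matrix.of fun x y => ∑ a, M (a, x) (a, y)

/-- The partial trace over the right tensor factor. -/
def traceOutRight [Fintype n] (M : Matrix (m × n) (m × n) ℂ) : Matrix m m ℂ :=
  Matrix.of fun a b => ∑ x, M (a, x) (b, x)

lemma traceOutLeft_posSemidef [Fintype m] {M : Matrix (m × n) (m × n) ℂ} (hM : M.PosSemidef) :
    (traceOutLeft M).PosSemidef := by
  have : traceOutLeft M = ∑ a, M.submatrix (Prod.mk a) (Prod.mk a) := by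
    ext x y
    simp only [traceOutLeft, of_apply, Matrix.sum_apply, submatrix_apply]
  rw [this]
  exact posSemidef_sum _ fun a _ => hM.submatrix _

lemma traceOutRight_posSemidef [Fintype n] {M : Matrix (m × n) (m × n) ℂ} (hM : M.PosSemidef) :
    (traceOutRight M).PosSemidef :=
  traceOutLeft_posSemidef (hM.submatrix Prod.swap)

lemma trace_traceOutRight [Fintype m] [Fintype n] (M : Matrix (m × n) (m × n) ℂ) :
    (traceOutRight M).trace = M.trace := by
  simp only [Matrix.trace, diag_apply, traceOutRight, of_apply, Fintype.sum_prod_type]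

lemma traceOutLeft_conj_one_kronecker [Fintype m] [DecidableEq m] [Fintype n]
    (M : Matrix (m × n) (m × n) ℂ) (V : Matrix n n ℂ) :
    traceOutLeft ((1 ⊗ₖ V)ᴴ * M * (1 ⊗ₖ V)) = Vᴴ * traceOutLeft M * V := by
  ext x y
  simp only [traceOutLeft, of_apply, mul_apply, conjTranspose_apply, kroneckerMap_apply,
    Fintype.sum_prod_type, one_apply, Finset.sum_mul, Finset.mul_sum]
  simp only [ite_mul, one_mul, zero_mul, mul_ite, mul_zero, star_zero, apply_ite star,
    Finset.sum_ite_irrel, Finset.sum_const_zero, Finset.sum_ite_eq', Finset.mem_univ, if_true]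
  rw [Finset.sum_comm]
  exact Finset.sum_congr rfl fun _ _ => Finset.sum_comm

lemma trace_mul_kronecker_one [Fintype m] [Fintype n] [DecidableEq n]
    (M : Matrix (m × n) (m × n) ℂ) (Y : Matrix m m ℂ) :
    (M * (Y ⊗ₖ (1 : Matrix n n ℂ))).trace = (traceOutRight M * Y).trace := by
  simp only [Matrix.trace, diag_apply, mul_apply, traceOutRight, of_apply, kroneckerMap_apply,
    Fintype.sum_prod_type, one_apply, mul_ite, mul_one, mul_zero, Finset.sum_ite_eq',
    Finset.mem_univ, if_true, Finset.sum_mul]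
  exact Finset.sum_congr rfl fun _ _ => Finset.sum_comm

lemma variationalForm_kronecker_one [Fintype m] [Fintype n] [DecidableEq n]
    (ρ σ : Matrix (m × n) (m × n) ℂ) (t : ℝ) (Y : Matrix m m ℂ) :
    variationalForm ρ σ t (Y ⊗ₖ (1 : Matrix n n ℂ)) =
      variationalForm (traceOutRight ρ) (traceOutRight σ) t Y := by
  simp only [variationalForm, conjTranspose_kronecker, conjTranspose_one, ← mul_kronecker_mul,
    Matrix.one_mul, trace_mul_kronecker_one]

lemma variationalForm_submatrix [Fintype m] [Fintype l] (ρ σ : Matrix m m ℂ) (e : l ≃ m) (t : ℝ)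
    (Y : Matrix m m ℂ) :
    variationalForm (ρ.submatrix e e) (σ.submatrix e e) t (Y.submatrix e e) =
      variationalForm ρ σ t Y := by
  have trace_submatrix (M : Matrix m m ℂ) : (M.submatrix e e).trace = M.trace :=
    e.sum_comp fun i => M i i
  simp only [variationalForm, conjTranspose_submatrix, submatrix_mul_equiv, trace_submatrix]

lemma sum_mul_log_eq [Fintype n] (p : n → ℝ) :
    ∑ i, p i * Real.log (p i) = -(∑ i, entropyTerm (p i)) * Real.log 2 := by
  rw [← Finset.sum_neg_distrib, Finset.sum_mul]
  refine Finset.sum_congr rfl fun i _ => ?_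
  have : Real.log 2 ≠ 0 := (Real.log_pos one_lt_two).ne'
  simp only [entropyTerm, Real.logb]
  field_simp

lemma sum_diag_conj_one_kronecker [Fintype m] [DecidableEq m] [Fintype n] [DecidableEq n]
    {M : Matrix (m × n) (m × n) ℂ} {V : Matrix n n ℂ} (hV : Vᴴ * V = 1) {q : n → ℝ}
    (hM : traceOutLeft M = V * diagonal (fun i => (q i : ℂ)) * Vᴴ) (x : n) :
    ∑ a, (((1 : Matrix m m ℂ) ⊗ₖ V)ᴴ * M * ((1 : Matrix m m ℂ) ⊗ₖ V)) (a, x) (a, x) = q x := by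
  change traceOutLeft ((1 ⊗ₖ V)ᴴ * M * (1 ⊗ₖ V)) x x = q x
  calc traceOutLeft ((1 ⊗ₖ V)ᴴ * M * (1 ⊗ₖ V)) x x
      = (Vᴴ * V * diagonal (fun i => (q i : ℂ)) * (Vᴴ * V)) x x := by
        rw [traceOutLeft_conj_one_kronecker, hM]
        simp only [Matrix.mul_assoc]
    _ = q x := by rw [hV, Matrix.one_mul, Matrix.mul_one, diagonal_apply_eq]

/-- The conditional entropy `H(ρ) - H(tr_m ρ)` is, up to sign, the entropy of `ρ` relative to
`1 ⊗ tr_m ρ`. -/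
lemma exists_spectralPair_one_kronecker [Fintype m] [DecidableEq m] [Fintype n] [DecidableEq n]
    {ρ : Matrix (m × n) (m × n) ℂ} (hρ : ρ.PosSemidef) :
    ∃ P : SpectralPair (m × n), P.ρ = ρ ∧ P.σ = 1 ⊗ₖ traceOutLeft ρ ∧
      P.relEntropy = (vnEntropy (traceOutLeft ρ) - vnEntropy ρ) * Real.log 2 := by
  have hτ := traceOutLeft_posSemidef hρ
  obtain ⟨U, hU, -, hUρ⟩ := exists_unitary_diagonalization hρ.1
  obtain ⟨V, hV, -, hVτ⟩ := exists_unitary_diagonalization hτ.1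
  set q := hτ.1.eigenvalues
  have sum_diag := sum_diag_conj_one_kronecker hV hVτ
  let P : SpectralPair (m × n) :=
    { U := U
      V := 1 ⊗ₖ V
      p := hρ.1.eigenvalues
      q := fun j => q j.2
      U_isometry := hU
      V_isometry := by
        rw [conjTranspose_kronecker, ← mul_kronecker_mul, hV, conjTranspose_one, Matrix.one_mul,
          one_kronecker_one]
      p_nonneg := hρ.eigenvalues_nonneg
      q_nonneg := fun j => hτ.eigenvalues_nonneg j.2
      support := by
        rintro ⟨a, x⟩ hx
        have h := sum_diag x
        rw [show q x = 0 from hx, Complex.ofReal_zero, Finset.sum_eq_zero_iff_of_nonneg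
          fun a _ => (hρ.conjTranspose_mul_mul_same _).diag_nonneg] at h
        rw [← hUρ]
        exact h a (Finset.mem_univ a) }
  have hPρ : P.ρ = ρ := hUρ.symm
  refine ⟨P, hPρ, ?_, ?_⟩
  · have : diagonal (fun j : m × n => ((q j.2 : ℝ) : ℂ)) =
        (1 : Matrix m m ℂ) ⊗ₖ diagonal (fun i => (q i : ℂ)) := by
      rw [← diagonal_one, diagonal_kronecker_diagonal]
      simp only [one_mul]
    rw [hVτ]
    simp only [SpectralPair.σ, P, this, conjTranspose_kronecker, conjTranspose_one,
      ← mul_kronecker_mul, Matrix.one_mul]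
  · have cross_term : ∑ j, ((P.Vᴴ * ρ * P.V) j j).re * Real.log (P.q j) =
        ∑ x, q x * Real.log (q x) := by
      rw [Fintype.sum_prod_type_right]
      refine Finset.sum_congr rfl fun x _ => ?_
      simp only [P]
      rw [← Finset.sum_mul, ← Complex.re_sum, sum_diag, Complex.ofReal_re]
    rw [SpectralPair.relEntropy, hPρ, cross_term, sum_mul_log_eq, sum_mul_log_eq,
      vnEntropy_eq_sum_eigenvalues hρ.1, vnEntropy_eq_sum_eigenvalues hτ.1]
    ring

/-- Strong subadditivity. -/
theorem vnEntropy_add_vnEntropy_le {A B C : Type*} [Fintype A] [DecidableEq A]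
    [Fintype B] [DecidableEq B] [Fintype C] [DecidableEq C]
    {ρ : Matrix (A × (B × C)) (A × (B × C)) ℂ} (hρ : ρ.PosSemidef) {τ : Matrix (A × B) (A × B) ℂ}
    (hτ : τ = traceOutRight
      (ρ.submatrix (Equiv.prodAssoc A B C) (Equiv.prodAssoc A B C))) :
    vnEntropy ρ + vnEntropy (traceOutLeft τ) ≤ vnEntropy τ + vnEntropy (traceOutLeft ρ) := by
  set e := Equiv.prodAssoc A B C
  have hρe := hρ.submatrix e
  obtain ⟨P, hPρ, hPσ, hP⟩ := exists_spectralPair_one_kronecker hρ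
  obtain ⟨P', hPρ', hPσ', hP'⟩ :=
    exists_spectralPair_one_kronecker (hτ ▸ traceOutRight_posSemidef hρe)
  have σ_eq : (1 : Matrix A A ℂ) ⊗ₖ traceOutLeft τ =
      traceOutRight (((1 : Matrix A A ℂ) ⊗ₖ traceOutLeft ρ).submatrix e e) := by
    ext i j
    simp only [traceOutLeft, traceOutRight, hτ, kroneckerMap_apply, of_apply, submatrix_apply,
      Equiv.prodAssoc_apply, e]
    rw [Finset.sum_comm, Finset.mul_sum]
  have trace_eq : P.ρ.trace = P'.ρ.trace := by
    rw [hPρ, hPρ', hτ, trace_traceOutRight]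
    exact (e.sum_comp fun i => ρ i i).symm
  have mono : P'.relEntropy ≤ P.relEntropy := by
    refine SpectralPair.relEntropy_le_of_variationalForm trace_eq fun t Y =>
      ⟨(Y ⊗ₖ (1 : Matrix C C ℂ)).submatrix e.symm e.symm, ?_⟩
    rw [hPρ, hPσ, hPρ', hPσ', σ_eq, hτ, ← variationalForm_kronecker_one,
      ← variationalForm_submatrix ρ _ e, submatrix_submatrix, Equiv.symm_comp_self, submatrix_id_id]
  rw [hP, hP'] at mono
  linarith [le_of_mul_le_mul_right mono (Real.log_pos one_lt_two)]

end PartialTrace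

/-! ### Entropy of entanglement -/

section EntanglementEntropy

variable {S T : Type*} [Fintype S] [Fintype T]

open Classical in
/-- The entropy of entanglement of the vector `∑ M s t |s⟩|t⟩`. -/
noncomputable def entanglementEntropy (M : Matrix S T ℂ) : ℝ := vnEntropy (M * Mᴴ)

lemma entanglementEntropy_eq_vnEntropy [DecidableEq S] (M : Matrix S T ℂ) :
    entanglementEntropy M = vnEntropy (M * Mᴴ) := by
  rw [entanglementEntropy]
  congr!

lemma entanglementEntropy_eq_sum_roots [DecidableEq S] (M : Matrix S T ℂ) :
    entanglementEntropy M = ((M * Mᴴ).charpoly.roots.map fun z : ℂ => entropyTerm z.re).sum := by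
  rw [entanglementEntropy_eq_vnEntropy,
    vnEntropy_eq_sum_roots (posSemidef_self_mul_conjTranspose M).1]

lemma entanglementEntropy_transpose (M : Matrix S T ℂ) :
    entanglementEntropy Mᵀ = entanglementEntropy M := by
  classical
  have gram_transpose : (Mᵀ * Mᵀᴴ)ᵀ = Mᴴ * M := by
    rw [transpose_mul, transpose_transpose]
    rfl
  rw [entanglementEntropy_eq_sum_roots, entanglementEntropy_eq_sum_roots,
    sum_map_roots_charpoly_mul_comm M _ (by simp), ← charpoly_transpose (Mᵀ * Mᵀᴴ), gram_transpose]

lemma entanglementEntropy_mul_of_isometry {X : Type*} [Fintype X] [DecidableEq S]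
    {V : Matrix X S ℂ} (hV : Vᴴ * V = 1) (M : Matrix S T ℂ) :
    entanglementEntropy (V * M) = entanglementEntropy M := by
  classical
  rw [entanglementEntropy_eq_sum_roots, entanglementEntropy_eq_sum_roots, conjTranspose_mul,
    Matrix.mul_assoc, sum_map_roots_charpoly_mul_comm _ _ (by simp), Matrix.mul_assoc,
    Matrix.mul_assoc, hV, Matrix.mul_one]

end EntanglementEntropy

/-! ### Coordinates of a pure state -/

section Amplitude

open Classical in
/-- The incidence matrix of the graph of `π`. -/
noncomputable def fiberMatrix {Ω P : Type*} (π : Ω → P) : Matrix Ω P ℂ :=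
  Matrix.of fun ω p => if π ω = p then 1 else 0

open Classical in
/-- The vector `∑ v ω |π ω⟩|κ ω⟩` as a matrix: the state `v` seen as a bipartite state through the
pair of coordinates `(π, κ)`. -/
noncomputable def amplitude {Ω P Q : Type*} [Fintype Ω] (v : Ω → ℂ) (π : Ω → P) (κ : Ω → Q) :
    Matrix P Q ℂ :=
  (fiberMatrix π)ᵀ * (diagonal v * fiberMatrix κ)

variable {Ω P Q : Type*} [Fintype Ω]

lemma amplitude_apply [DecidableEq P] [DecidableEq Q] (v : Ω → ℂ) (π : Ω → P) (κ : Ω → Q)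
    (p : P) (q : Q) :
    amplitude v π κ p q = ∑ ω, if π ω = p ∧ κ ω = q then v ω else 0 := by
  rw [amplitude, mul_apply]
  refine Finset.sum_congr rfl fun ω _ => ?_
  simp only [diagonal_mul, transpose_apply, fiberMatrix, of_apply]
  split_ifs <;> simp_all

lemma amplitude_transpose (v : Ω → ℂ) (π : Ω → P) (κ : Ω → Q) :
    (amplitude v π κ)ᵀ = amplitude v κ π := by
  classical
  ext q p
  simp only [transpose_apply, amplitude_apply, and_comm]

omit [Fintype Ω] in
lemma fiberMatrix_mul_conjTranspose [Fintype P] [DecidableEq P] (π : Ω → P) (ω ω' : Ω) :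
    (fiberMatrix π * (fiberMatrix π)ᴴ) ω ω' = if π ω = π ω' then 1 else 0 := by
  simp [fiberMatrix, mul_apply, apply_ite, eq_comm]

omit [Fintype Ω] in
lemma fiberMatrix_mul_conjTranspose_congr {P' : Type*} [Fintype P] [Fintype P'] {π : Ω → P}
    {π' : Ω → P'} (h : Setoid.ker π = Setoid.ker π') :
    fiberMatrix π * (fiberMatrix π)ᴴ = fiberMatrix π' * (fiberMatrix π')ᴴ := by
  classical
  ext ω ω'
  have := Setoid.ext_iff.1 h ω ω'
  simp only [Setoid.ker_def] at this
  simp only [fiberMatrix_mul_conjTranspose, this]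

lemma amplitude_eq_conjTranspose_mul [DecidableEq Ω] (v : Ω → ℂ) (π : Ω → P) (κ : Ω → Q) :
    amplitude v π κ = (fiberMatrix π)ᴴ * (diagonal v * fiberMatrix κ) := by
  have transpose_eq : (fiberMatrix π)ᵀ = (fiberMatrix π)ᴴ := by
    ext p ω
    simp [fiberMatrix, apply_ite]
  rw [amplitude, transpose_eq]
  congr!

variable [Fintype P] [Fintype Q]

lemma entanglementEntropy_amplitude [DecidableEq Ω] (v : Ω → ℂ) (π : Ω → P) (κ : Ω → Q) :
    entanglementEntropy (amplitude v π κ) =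
      ((diagonal v * (fiberMatrix κ * (fiberMatrix κ)ᴴ) * (diagonal v)ᴴ *
        (fiberMatrix π * (fiberMatrix π)ᴴ)).charpoly.roots.map
          fun z : ℂ => entropyTerm z.re).sum := by
  classical
  rw [entanglementEntropy_eq_sum_roots, amplitude_eq_conjTranspose_mul, Matrix.mul_assoc,
    sum_map_roots_charpoly_mul_comm _ _ (by simp)]
  simp only [conjTranspose_mul, conjTranspose_conjTranspose, Matrix.mul_assoc]

/-- Only the partitions of `Ω` induced by the two coordinates matter. -/
lemma entanglementEntropy_amplitude_congr {P' Q' : Type*} [Fintype P'] [Fintype Q'] (v : Ω → ℂ)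
    {π : Ω → P} {κ : Ω → Q} {π' : Ω → P'} {κ' : Ω → Q'} (hπ : Setoid.ker π = Setoid.ker π')
    (hκ : Setoid.ker κ = Setoid.ker κ') :
    entanglementEntropy (amplitude v π κ) = entanglementEntropy (amplitude v π' κ') := by
  classical
  rw [entanglementEntropy_amplitude, entanglementEntropy_amplitude,
    fiberMatrix_mul_conjTranspose_congr hπ, fiberMatrix_mul_conjTranspose_congr hκ]

lemma trace_amplitude_mul_conjTranspose (v : Ω → ℂ) {π : Ω → P} {κ : Ω → Q}
    (h : Setoid.ker π ⊓ Setoid.ker κ = ⊥) :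
    (amplitude v π κ * (amplitude v π κ)ᴴ).trace = star v ⬝ᵥ v := by
  classical
  have eq_of_eq (ω ω' : Ω) : π ω' = π ω ∧ κ ω = κ ω' ↔ ω = ω' := by
    rw [eq_comm (a := π ω')]
    exact Setoid.ext_iff.1 h ω ω'
  have trace_eq : (amplitude v π κ * (amplitude v π κ)ᴴ).trace =
      (diagonal v * (fiberMatrix κ * (fiberMatrix κ)ᴴ) *
        (diagonal (star v) * (fiberMatrix π * (fiberMatrix π)ᴴ))).trace := by
    rw [amplitude_eq_conjTranspose_mul, Matrix.mul_assoc, trace_mul_comm]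
    simp only [conjTranspose_mul, conjTranspose_conjTranspose, diagonal_conjTranspose,
      Matrix.mul_assoc]
  rw [trace_eq]
  refine Finset.sum_congr rfl fun ω _ => ?_
  simp only [diag_apply, mul_apply (M := _ * _), diagonal_mul, fiberMatrix_mul_conjTranspose,
    mul_ite, mul_one, mul_zero, ite_mul, zero_mul, ← ite_and, eq_of_eq, Finset.sum_ite_eq,
    Finset.mem_univ, if_true]
  exact mul_comm _ _

omit [Fintype P] in
lemma traceOutRight_amplitude {Y : Type*} [Fintype Y] (v : Ω → ℂ) (π : Ω → P) (ρ : Ω → Y)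
    (κ : Ω → Q) :
    traceOutRight (amplitude v (fun ω => (π ω, ρ ω)) κ *
        (amplitude v (fun ω => (π ω, ρ ω)) κ)ᴴ) =
      amplitude v π (fun ω => (ρ ω, κ ω)) * (amplitude v π fun ω => (ρ ω, κ ω))ᴴ := by
  classical
  ext p p'
  simp only [traceOutRight, of_apply, mul_apply, conjTranspose_apply, amplitude_apply,
    Prod.mk.injEq, and_assoc, Fintype.sum_prod_type]

omit [Fintype P] in
lemma traceOutLeft_amplitude {Y : Type*} [Fintype Y] (v : Ω → ℂ) (ρ : Ω → Y) (π : Ω → P)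
    (κ : Ω → Q) :
    traceOutLeft (amplitude v (fun ω => (ρ ω, π ω)) κ *
        (amplitude v (fun ω => (ρ ω, π ω)) κ)ᴴ) =
      amplitude v π (fun ω => (ρ ω, κ ω)) * (amplitude v π fun ω => (ρ ω, κ ω))ᴴ := by
  classical
  ext p p'
  simp only [traceOutLeft, of_apply, mul_apply, conjTranspose_apply, amplitude_apply,
    Prod.mk.injEq, and_assoc, and_left_comm, Fintype.sum_prod_type]

end Amplitude

section CutEntropy

variable {Ω : Type*} [Fintype Ω]

open Classical in
/-- The entropy of entanglement of the state `v` across the cut separating the parties who know the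
class of `ω` modulo `s` from those who know it modulo `t`. -/
noncomputable def cutEntropy (v : Ω → ℂ) (s t : Setoid Ω) : ℝ :=
  entanglementEntropy (amplitude v (Quotient.mk s) (Quotient.mk t))

lemma cutEntropy_ker {P Q : Type*} [Fintype P] [Fintype Q] (v : Ω → ℂ) (π : Ω → P) (κ : Ω → Q) :
    cutEntropy v (Setoid.ker π) (Setoid.ker κ) = entanglementEntropy (amplitude v π κ) := by
  classical
  exact entanglementEntropy_amplitude_congr v (Setoid.ker_mk_eq _) (Setoid.ker_mk_eq _)

omit [Fintype Ω] in
lemma ker_prodMk {P Q : Type*} (π : Ω → P) (κ : Ω → Q) :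
    Setoid.ker (fun ω => (π ω, κ ω)) = Setoid.ker π ⊓ Setoid.ker κ :=
  Setoid.ext fun _ _ => Prod.mk_inj

/-- The amplitudes of `v` in the coordinates `e`, as a matrix. -/
def coordMatrix {P Q : Type*} (e : Ω ≃ P × Q) (v : Ω → ℂ) : Matrix P Q ℂ :=
  Matrix.of fun p q => v (e.symm (p, q))

lemma amplitude_equiv {P Q : Type*} (e : Ω ≃ P × Q) (v : Ω → ℂ) :
    amplitude v (Prod.fst ∘ e) (Prod.snd ∘ e) = coordMatrix e v := by
  classical
  ext p q
  have coord_iff (ω : Ω) : (e ω).1 = p ∧ (e ω).2 = q ↔ ω = e.symm (p, q) := by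
    rw [← Prod.ext_iff (y := (p, q)), e.eq_symm_apply]
  simp only [amplitude_apply, Function.comp_apply, coord_iff, Finset.sum_ite_eq',
    Finset.mem_univ, if_true, coordMatrix, of_apply]

lemma cutEntropy_equiv {P Q : Type*} [Fintype P] [Fintype Q] (e : Ω ≃ P × Q) (v : Ω → ℂ) :
    cutEntropy v (Setoid.ker (Prod.fst ∘ e)) (Setoid.ker (Prod.snd ∘ e)) =
      entanglementEntropy (coordMatrix e v) := by
  rw [cutEntropy_ker, amplitude_equiv]

lemma trace_coordMatrix_mul_conjTranspose {P Q : Type*} [Fintype P] [Fintype Q] (e : Ω ≃ P × Q)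
    (v : Ω → ℂ) : (coordMatrix e v * (coordMatrix e v)ᴴ).trace = star v ⬝ᵥ v := by
  rw [← amplitude_equiv]
  refine trace_amplitude_mul_conjTranspose v (eq_bot_iff.2 fun ω ω' h => ?_)
  exact e.injective (Prod.ext h.1 h.2)

lemma cutEntropy_le_of_one_sub_le_fidelity {P Q : Type*} [Fintype P] [Fintype Q]
    (e : Ω ≃ P × Q) {v : Ω → ℂ} (hv : star v ⬝ᵥ v = 1) {ξ : P → ℂ} (hξ : star ξ ⬝ᵥ ξ = 1) {ε : ℝ}
    (hε : 1 - ε ≤ (star ξ ⬝ᵥ ((coordMatrix e v * (coordMatrix e v)ᴴ) *ᵥ ξ)).re) :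
    cutEntropy v (Setoid.ker (Prod.fst ∘ e)) (Setoid.ker (Prod.snd ∘ e)) ≤
      1 + ε * Real.logb 2 (Fintype.card P) := by
  classical
  rw [cutEntropy_equiv, entanglementEntropy_eq_vnEntropy]
  exact vnEntropy_le_of_one_sub_le_fidelity (posSemidef_self_mul_conjTranspose _)
    ((trace_coordMatrix_mul_conjTranspose e v).trans hv) hξ hε

lemma cutEntropy_comm (v : Ω → ℂ) (s t : Setoid Ω) : cutEntropy v s t = cutEntropy v t s := by
  classical
  rw [cutEntropy, ← entanglementEntropy_transpose, amplitude_transpose, cutEntropy]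

lemma cutEntropy_submodular (v : Ω → ℂ) (a b c d : Setoid Ω) :
    cutEntropy v (a ⊓ b ⊓ c) d + cutEntropy v b (a ⊓ c ⊓ d) ≤
      cutEntropy v (a ⊓ b) (c ⊓ d) + cutEntropy v (b ⊓ c) (a ⊓ d) := by
  classical
  set α : Ω → Quotient a := Quotient.mk a
  set β : Ω → Quotient b := Quotient.mk b
  set γ : Ω → Quotient c := Quotient.mk c
  set δ : Ω → Quotient d := Quotient.mk d
  set M := amplitude v (fun ω => (α ω, β ω, γ ω)) δ
  set N := amplitude v (fun ω => (α ω, β ω)) fun ω => (γ ω, δ ω)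
  have reduced : N * Nᴴ = traceOutRight
      ((M * Mᴴ).submatrix (Equiv.prodAssoc _ _ _) (Equiv.prodAssoc _ _ _)) := by
    rw [← traceOutRight_amplitude]
    ext x y
    simp only [traceOutRight, M, mul_apply, amplitude_apply, and_assoc, of_apply, submatrix_apply,
      conjTranspose_apply, Equiv.prodAssoc_apply, Prod.ext_iff]
  have ssa := vnEntropy_add_vnEntropy_le (posSemidef_self_mul_conjTranspose M) reduced
  rw [traceOutLeft_amplitude, traceOutLeft_amplitude] at ssa
  have ker_mk (s : Setoid Ω) : Setoid.ker (Quotient.mk s) = s := Setoid.ker_mk_eq s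
  simpa only [← entanglementEntropy_eq_vnEntropy, M, N, ← cutEntropy_ker, ker_prodMk, α, β, γ, δ,
    ker_mk, inf_assoc] using ssa

/-- Nothing is entangled with a party who knows nothing. -/
lemma cutEntropy_top_bot {v : Ω → ℂ} (hv : star v ⬝ᵥ v = 1) : cutEntropy v ⊤ ⊥ = 0 := by
  classical
  have ker_unit : Setoid.ker (fun _ : Ω => ()) = ⊤ := Setoid.ext fun _ _ => by simp
  have ker_id : Setoid.ker (id : Ω → Ω) = ⊥ := Setoid.ker_eq_bot_iff.2 Function.injective_id
  rw [← ker_unit, ← ker_id, cutEntropy_ker, entanglementEntropy_eq_vnEntropy]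
  set M := amplitude v (fun _ => ()) id
  have hM := (posSemidef_self_mul_conjTranspose M).1
  have trace_eq : (M * Mᴴ).trace = 1 :=
    (trace_amplitude_mul_conjTranspose v (by rw [ker_id, inf_bot_eq])).trans hv
  have eigenvalue_eq := sum_eigenvalues_eq_one hM trace_eq
  rw [Fintype.sum_unique] at eigenvalue_eq
  rw [vnEntropy_eq_sum_eigenvalues hM, Fintype.sum_unique, eigenvalue_eq, entropyTerm,
    Real.logb_one, mul_zero, neg_zero]

lemma cutEntropy_ker_le_logb_card {P : Type*} [Fintype P] {v : Ω → ℂ} (hv : star v ⬝ᵥ v = 1)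
    {π : Ω → P} {t : Setoid Ω} (h : Setoid.ker π ⊓ t = ⊥) :
    cutEntropy v (Setoid.ker π) t ≤ Real.logb 2 (Fintype.card P) := by
  classical
  rw [← Setoid.ker_mk_eq t] at h ⊢
  rw [cutEntropy_ker, entanglementEntropy_eq_vnEntropy]
  exact vnEntropy_le_logb_card (posSemidef_self_mul_conjTranspose _)
    ((trace_amplitude_mul_conjTranspose v h).trans hv)

end CutEntropy

/-! ### Local isometries and tensor powers -/

section LocalIsometry

open scoped Kronecker

variable {Ω Ω' X Y T : Type*} [Fintype Ω] [Fintype Ω'] [Fintype X] [Fintype Y] [Fintype T]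

lemma cutEntropy_comp_equiv (e : Ω' ≃ Ω) (v : Ω → ℂ) (s t : Setoid Ω) :
    cutEntropy (v ∘ e) (s.comap e) (t.comap e) = cutEntropy v s t := by
  classical
  have ker_mk (s : Setoid Ω) : s.comap e = Setoid.ker (Quotient.mk s ∘ e) := s.comap_eq
  have amplitude_eq : amplitude (v ∘ e) (Quotient.mk s ∘ e) (Quotient.mk t ∘ e) =
      amplitude v (Quotient.mk s) (Quotient.mk t) := by
    ext p q
    rw [amplitude_apply, amplitude_apply]
    exact e.sum_comp fun ω => if Quotient.mk s ω = p ∧ Quotient.mk t ω = q then v ω else 0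
  rw [ker_mk, ker_mk, cutEntropy_ker, amplitude_eq, cutEntropy]

/-- The state `(V ⊗ 1) v`. -/
def applyLeft (V : Matrix X Y ℂ) (v : Y × T → ℂ) : X × T → ℂ :=
  fun p => ∑ y, V p.1 y * v (y, p.2)

omit [Fintype X] in
lemma applyLeft_eq_mulVec [DecidableEq T] (V : Matrix X Y ℂ) (v : Y × T → ℂ) :
    applyLeft V v = (V ⊗ₖ (1 : Matrix T T ℂ)) *ᵥ v := by
  ext p
  simp [applyLeft, mulVec, dotProduct, Fintype.sum_prod_type, one_apply]

omit [Fintype Y] in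
lemma conjTranspose_kronecker_one_mul [DecidableEq Y] [DecidableEq T] {V : Matrix X Y ℂ}
    (hV : Vᴴ * V = 1) : (V ⊗ₖ (1 : Matrix T T ℂ))ᴴ * (V ⊗ₖ (1 : Matrix T T ℂ)) = 1 := by
  rw [conjTranspose_kronecker, ← mul_kronecker_mul, hV, conjTranspose_one, Matrix.one_mul,
    one_kronecker_one]

lemma dotProduct_applyLeft [DecidableEq Y] {V : Matrix X Y ℂ} (hV : Vᴴ * V = 1)
    (v : Y × T → ℂ) : star (applyLeft V v) ⬝ᵥ applyLeft V v = star v ⬝ᵥ v := by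
  classical
  rw [applyLeft_eq_mulVec, star_mulVec, ← dotProduct_mulVec, mulVec_mulVec,
    conjTranspose_kronecker_one_mul hV, one_mulVec]

lemma amplitude_fst_apply {S Q : Type*} [DecidableEq S] [DecidableEq Q] (v : Y × T → ℂ)
    (σ : T → S) (τ : T → Q) (y : Y) (s : S) (q : Q) :
    amplitude v (fun p => (p.1, σ p.2)) (fun p => τ p.2) (y, s) q =
      ∑ t, if σ t = s ∧ τ t = q then v (y, t) else 0 := by
  classical
  simp only [amplitude_apply, Fintype.sum_prod_type_right, Prod.mk.injEq, and_assoc, ite_and,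
    Finset.sum_ite_eq', Finset.mem_univ, if_true]

lemma amplitude_applyLeft {S Q : Type*} [Fintype S] [DecidableEq S] (V : Matrix X Y ℂ)
    (v : Y × T → ℂ) (σ : T → S) (τ : T → Q) :
    amplitude (applyLeft V v) (fun p => (p.1, σ p.2)) (fun p => τ p.2) =
      (V ⊗ₖ (1 : Matrix S S ℂ)) * amplitude v (fun p => (p.1, σ p.2)) (fun p => τ p.2) := by
  classical
  ext ⟨x, s⟩ q
  simp only [mul_apply, Fintype.sum_prod_type, kroneckerMap_apply, one_apply, mul_ite, mul_one,
    mul_zero, ite_mul, zero_mul, Finset.sum_ite_eq, Finset.mem_univ, if_true, amplitude_fst_apply,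
    applyLeft, Finset.mul_sum]
  rw [Finset.sum_comm]
  refine Finset.sum_congr rfl fun t _ => ?_
  split_ifs <;> simp

open Classical in
lemma cutEntropy_ker_fst_inf_comap_snd (v : Y × T → ℂ) (s t : Setoid T) :
    cutEntropy v (Setoid.ker Prod.fst ⊓ s.comap Prod.snd) (t.comap Prod.snd) =
      entanglementEntropy
        (amplitude v (fun p => (p.1, Quotient.mk s p.2)) fun p => Quotient.mk t p.2) := by
  rw [← cutEntropy_ker, ker_prodMk, Setoid.comap_eq, Setoid.comap_eq]
  rfl

lemma cutEntropy_applyLeft [DecidableEq Y] {V : Matrix X Y ℂ} (hV : Vᴴ * V = 1) (v : Y × T → ℂ)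
    (s t : Setoid T) :
    cutEntropy (applyLeft V v) (Setoid.ker Prod.fst ⊓ s.comap Prod.snd) (t.comap Prod.snd) =
      cutEntropy v (Setoid.ker Prod.fst ⊓ s.comap Prod.snd) (t.comap Prod.snd) := by
  classical
  rw [cutEntropy_ker_fst_inf_comap_snd, cutEntropy_ker_fst_inf_comap_snd, amplitude_applyLeft]
  exact entanglementEntropy_mul_of_isometry (conjTranspose_kronecker_one_mul hV) _

end LocalIsometry

section TensorPower

variable {Ω S T U : Type*}

/-- The state `v^{⊗n}`. -/
def tensorPower (v : Ω → ℂ) (n : ℕ) : (Fin n → Ω) → ℂ := fun ω => ∏ k, v (ω k)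

/-- The equality modulo `s` of each of the `n` letters of a word. -/
def wordSetoid (s : Setoid Ω) (n : ℕ) : Setoid (Fin n → Ω) :=
  @piSetoid (Fin n) (fun _ => Ω) fun _ => s

/-- The matrix of `M^{⊗n}`. -/
def matrixTensorPower (M : Matrix S T ℂ) (n : ℕ) : Matrix (Fin n → S) (Fin n → T) ℂ :=
  Matrix.of fun p q => ∏ k, M (p k) (q k)

lemma matrixTensorPower_mul [Fintype T] (M : Matrix S T ℂ) (N : Matrix T U ℂ) (n : ℕ) :
    matrixTensorPower (M * N) n = matrixTensorPower M n * matrixTensorPower N n := by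
  classical
  ext p q
  simp only [matrixTensorPower, of_apply, mul_apply, ← Finset.prod_mul_distrib]
  rw [Fintype.prod_sum]

lemma matrixTensorPower_conjTranspose (M : Matrix S T ℂ) (n : ℕ) :
    matrixTensorPower Mᴴ n = (matrixTensorPower M n)ᴴ := by
  ext p q
  simp [matrixTensorPower]

lemma matrixTensorPower_diagonal [DecidableEq S] (d : S → ℂ) (n : ℕ) :
    matrixTensorPower (diagonal d) n = diagonal (tensorPower d n) := by
  ext p q
  simp [matrixTensorPower, tensorPower, diagonal_apply, Finset.prod_ite_zero, funext_iff]

lemma sum_entropyTerm_tensorPower [Fintype S] {p : S → ℝ} (hp : ∑ i, p i = 1) (n : ℕ) :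
    ∑ i : Fin n → S, entropyTerm (∏ k, p (i k)) = n * ∑ i, entropyTerm (p i) := by
  induction n with
  | zero => simp [entropyTerm]
  | succ n ih =>
    have sum_prod_eq_one : ∑ i : Fin n → S, ∏ k, p (i k) = 1 := by
      rw [← Fintype.prod_sum, hp, Finset.prod_const_one]
    rw [← (Fin.consEquiv fun _ => S).sum_comp]
    simp only [Fin.consEquiv_apply, Fin.prod_univ_succ, Fin.cons_zero, Fin.cons_succ]
    rw [sum_entropyTerm_mul hp sum_prod_eq_one, ih]
    push_cast
    ring

lemma entanglementEntropy_matrixTensorPower [Fintype S] [Fintype T] {M : Matrix S T ℂ}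
    (hM : (M * Mᴴ).trace = 1) (n : ℕ) :
    entanglementEntropy (matrixTensorPower M n) = n * entanglementEntropy M := by
  classical
  have gram_hermitian := (posSemidef_self_mul_conjTranspose M).1
  obtain ⟨U, hU, -, hMU⟩ := exists_unitary_diagonalization gram_hermitian
  have power_isometry : (matrixTensorPower U n)ᴴ * matrixTensorPower U n = 1 := by
    rw [← matrixTensorPower_conjTranspose, ← matrixTensorPower_mul, hU, ← diagonal_one,
      matrixTensorPower_diagonal]
    exact congrArg diagonal (funext fun _ => Finset.prod_const_one)
  have gram_eq : matrixTensorPower M n * (matrixTensorPower M n)ᴴ = matrixTensorPower U n *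
      diagonal (fun i : Fin n → S => ((∏ k, gram_hermitian.eigenvalues (i k) : ℝ) : ℂ)) *
        (matrixTensorPower U n)ᴴ := by
    rw [← matrixTensorPower_conjTranspose, ← matrixTensorPower_conjTranspose,
      ← matrixTensorPower_mul]
    conv_lhs => rw [hMU, matrixTensorPower_mul, matrixTensorPower_mul, matrixTensorPower_diagonal]
    simp only [Complex.ofReal_prod]
    rfl
  rw [entanglementEntropy_eq_vnEntropy, gram_eq, vnEntropy_unitary_conj_diagonal power_isometry,
    sum_entropyTerm_tensorPower (sum_eigenvalues_eq_one gram_hermitian hM),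
    entanglementEntropy_eq_vnEntropy, vnEntropy_eq_sum_eigenvalues gram_hermitian]

lemma amplitude_tensorPower [Fintype Ω] (v : Ω → ℂ) (π : Ω → S) (κ : Ω → T) (n : ℕ) :
    amplitude (tensorPower v n) (fun ω => π ∘ ω) (fun ω => κ ∘ ω) =
      matrixTensorPower (amplitude v π κ) n := by
  classical
  ext p q
  simp only [amplitude_apply, matrixTensorPower, of_apply, tensorPower]
  rw [Fintype.prod_sum]
  refine Finset.sum_congr rfl fun ω _ => ?_
  simp only [Finset.prod_ite_zero, Finset.mem_univ, true_imp_iff, forall_and, funext_iff,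
    Function.comp_apply]

lemma cutEntropy_tensorPower [Fintype Ω] {v : Ω → ℂ} (hv : star v ⬝ᵥ v = 1) {s t : Setoid Ω}
    (h : s ⊓ t = ⊥) (n : ℕ) :
    cutEntropy (tensorPower v n) (wordSetoid s n) (wordSetoid t n) = n * cutEntropy v s t := by
  classical
  have ker_mk (s : Setoid Ω) :
      wordSetoid s n = Setoid.ker fun ω : Fin n → Ω => Quotient.mk s ∘ ω :=
    Setoid.ext fun ω ω' => by
      simp only [Setoid.ker_def, funext_iff, Function.comp_apply, Quotient.eq]
      rfl
  rw [ker_mk, ker_mk, cutEntropy_ker, amplitude_tensorPower,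
    entanglementEntropy_matrixTensorPower, cutEntropy]
  rw [trace_amplitude_mul_conjTranspose, hv]
  rwa [← Setoid.ker_mk_eq s, ← Setoid.ker_mk_eq t] at h

lemma dotProduct_tensorPower [Fintype Ω] {v : Ω → ℂ} (hv : star v ⬝ᵥ v = 1) (n : ℕ) :
    star (tensorPower v n) ⬝ᵥ tensorPower v n = 1 := by
  classical
  simp only [dotProduct, Pi.star_apply, tensorPower, star_prod, ← Finset.prod_mul_distrib]
  rw [← Fintype.prod_sum fun _ a => star (v a) * v a]
  exact Finset.prod_eq_one fun _ _ => hv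

end TensorPower

/-! ### Entropies of a pure state shared by several parties -/

/-- The properties shared by the functions sending a set of parties to its entropy in a pure
state. -/
structure IsPureEntropy {ι : Type*} [Fintype ι] [DecidableEq ι] (h : Finset ι → ℝ) : Prop where
  empty : h ∅ = 0
  compl (S : Finset ι) : h Sᶜ = h S
  submodular (S T : Finset ι) : h (S ∪ T) + h (S ∩ T) ≤ h S + h T

/-- The mutual information `I(S;T)` of an entropy function `h`. -/
def mutualInfo {ι : Type*} [DecidableEq ι] (h : Finset ι → ℝ) (S T : Finset ι) : ℝ :=
  h S + h T - h (S ∪ T)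

/-- The conditional mutual information `I(S;T|U)` of an entropy function `h`. -/
def condMutualInfo {ι : Type*} [DecidableEq ι] (h : Finset ι → ℝ) (S T U : Finset ι) : ℝ :=
  h (S ∪ U) + h (T ∪ U) - h (S ∪ T ∪ U) - h U

lemma condMutualInfo_comm {ι : Type*} [DecidableEq ι] (h : Finset ι → ℝ) (S T U : Finset ι) :
    condMutualInfo h S T U = condMutualInfo h T S U := by
  rw [condMutualInfo, condMutualInfo, Finset.union_comm S T, add_comm (h (S ∪ U))]

namespace IsPureEntropy

variable {ι : Type*} [Fintype ι] [DecidableEq ι] {h : Finset ι → ℝ} (hh : IsPureEntropy h)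
include hh

lemma nonneg (S : Finset ι) : 0 ≤ h S := by
  have sub := hh.submodular S Sᶜ
  have h_univ := hh.compl ∅
  rw [Finset.compl_empty] at h_univ
  rw [Finset.union_compl, Finset.inter_compl, h_univ, hh.empty, hh.compl] at sub
  linarith

lemma union_le (S T : Finset ι) : h (S ∪ T) ≤ h S + h T := by
  linarith [hh.submodular S T, hh.nonneg (S ∩ T)]

/-- The Araki–Lieb inequality. -/
lemma le_union_add {S T : Finset ι} (hST : Disjoint S T) : h S ≤ h (S ∪ T) + h T := by
  have compl_eq : Sᶜ = (S ∪ T)ᶜ ∪ T := by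
    rw [Finset.compl_union, Finset.inter_union_distrib_right, Finset.union_comm Tᶜ,
      Finset.union_compl, Finset.inter_univ,
      Finset.union_eq_left.2 (Finset.subset_compl_iff_disjoint_left.2 hST)]
  rw [← hh.compl S, ← hh.compl (S ∪ T), compl_eq]
  exact hh.union_le _ _

lemma mutualInfo_union_le {S S' T : Finset ι} (hT : Disjoint S (S' ∪ T)) :
    mutualInfo h (S ∪ S') T ≤ 2 * h S + mutualInfo h S' T := by
  have al := hh.le_union_add hT.symm
  have sub := hh.union_le S S'
  rw [Finset.union_comm (S' ∪ T), ← Finset.union_assoc] at al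
  unfold mutualInfo
  linarith

lemma condMutualInfo_mono_left {S S' T : Finset ι} (hS : S ⊆ S') (hT : Disjoint S' T)
    (U : Finset ι) : condMutualInfo h S T U ≤ condMutualInfo h S' T U := by
  have sub := hh.submodular (S' ∪ U) (S ∪ T ∪ U)
  have union_eq : S' ∪ U ∪ (S ∪ T ∪ U) = S' ∪ T ∪ U := by
    rw [Finset.union_union_union_comm, Finset.union_self, ← Finset.union_assoc,
      Finset.union_eq_left.2 hS]
  have inter_eq : (S' ∪ U) ∩ (S ∪ T ∪ U) = S ∪ U := by
    rw [← Finset.inter_union_distrib_right, Finset.inter_union_distrib_left,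
      Finset.inter_eq_right.2 hS, Finset.disjoint_iff_inter_eq_empty.1 hT, Finset.union_empty]
  rw [union_eq, inter_eq] at sub
  unfold condMutualInfo
  linarith

lemma condMutualInfo_mono {S S' T T' : Finset ι} (hS : S ⊆ S') (hT : T ⊆ T')
    (hST : Disjoint S' T') (U : Finset ι) : condMutualInfo h S T U ≤ condMutualInfo h S' T' U :=
  calc condMutualInfo h S T U ≤ condMutualInfo h S' T U :=
        hh.condMutualInfo_mono_left hS (hST.mono_right hT) U
    _ = condMutualInfo h T S' U := condMutualInfo_comm h _ _ _
    _ ≤ condMutualInfo h T' S' U := hh.condMutualInfo_mono_left hT hST.symm U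
    _ = condMutualInfo h S' T' U := condMutualInfo_comm h _ _ _

lemma mutualInfo_mono {S S' T T' : Finset ι} (hS : S ⊆ S') (hT : T ⊆ T') (hST : Disjoint S' T') :
    mutualInfo h S T ≤ mutualInfo h S' T' := by
  simpa only [condMutualInfo, mutualInfo, Finset.union_empty, hh.empty, sub_zero] using
    hh.condMutualInfo_mono hS hT hST ∅

end IsPureEntropy

section PartyEntropy

variable {ι Ω Ω' : Type*} [Fintype ι] [DecidableEq ι] [Fintype Ω] [Fintype Ω']

/-- The entropy of the joint system of the parties in `S` in the pure state `v`, where the system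
of party `i` holds the class of `ω` modulo `r i`. -/
noncomputable def partyEntropy (v : Ω → ℂ) (r : ι → Setoid Ω) (S : Finset ι) : ℝ :=
  cutEntropy v (S.inf r) (Sᶜ.inf r)

lemma partyEntropy_compl (v : Ω → ℂ) (r : ι → Setoid Ω) (S : Finset ι) :
    partyEntropy v r Sᶜ = partyEntropy v r S := by
  rw [partyEntropy, compl_compl, cutEntropy_comm, partyEntropy]

lemma partyEntropy_submodular (v : Ω → ℂ) (r : ι → Setoid Ω) (S T : Finset ι) :
    partyEntropy v r (S ∪ T) + partyEntropy v r (S ∩ T) ≤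
      partyEntropy v r S + partyEntropy v r T := by
  have ssa := cutEntropy_submodular v ((S \ T).inf r) ((S ∩ T).inf r) ((T \ S).inf r)
    ((S ∪ T)ᶜ.inf r)
  have cover : S \ T ∪ S ∩ T ∪ T \ S = S ∪ T := by grind
  have cover_compl_inter : S \ T ∪ T \ S ∪ (S ∪ T)ᶜ = (S ∩ T)ᶜ := by grind [Finset.mem_compl]
  have cover_left : S \ T ∪ S ∩ T = S := by grind
  have cover_right : S ∩ T ∪ T \ S = T := by grind
  have cover_compl_left : T \ S ∪ (S ∪ T)ᶜ = Sᶜ := by grind [Finset.mem_compl]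
  have cover_compl_right : S \ T ∪ (S ∪ T)ᶜ = Tᶜ := by grind [Finset.mem_compl]
  simp only [← Finset.inf_union] at ssa
  rwa [cover, cover_compl_inter, cover_left, cover_right, cover_compl_left,
    cover_compl_right] at ssa

lemma isPureEntropy_partyEntropy {v : Ω → ℂ} (hv : star v ⬝ᵥ v = 1) {r : ι → Setoid Ω}
    (hr : Finset.univ.inf r = ⊥) : IsPureEntropy (partyEntropy v r) where
  empty := by
    rw [partyEntropy, Finset.inf_empty, Finset.compl_empty, hr, cutEntropy_top_bot hv]
  compl := partyEntropy_compl v r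
  submodular := partyEntropy_submodular v r

lemma partyEntropy_le_logb_card {P : Type*} [Fintype P] {v : Ω → ℂ} (hv : star v ⬝ᵥ v = 1)
    {r : ι → Setoid Ω} (hr : Finset.univ.inf r = ⊥) {i : ι} {π : Ω → P}
    (hi : r i = Setoid.ker π) : partyEntropy v r {i} ≤ Real.logb 2 (Fintype.card P) := by
  rw [partyEntropy, Finset.inf_singleton, hi]
  refine cutEntropy_ker_le_logb_card hv ?_
  rw [← hi, ← hr, ← Finset.inf_singleton (f := r) (b := i), ← Finset.inf_union, Finset.union_compl]

omit [Fintype ι] [DecidableEq ι] [Fintype Ω] in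
lemma finset_inf_setoid_apply (r : ι → Setoid Ω) (S : Finset ι) (x y : Ω) :
    S.inf r x y ↔ ∀ i ∈ S, r i x y := by
  classical
  induction S using Finset.induction with
  | empty => exact ⟨fun _ i hi => absurd hi (Finset.notMem_empty i), fun _ => trivial⟩
  | insert i S _ ih => rw [Finset.inf_insert, Setoid.inf_iff_and, ih, Finset.forall_mem_insert]

omit [Fintype ι] [DecidableEq ι] [Fintype Ω] [Fintype Ω'] in
lemma finset_inf_comap (f : Ω' → Ω) (r : ι → Setoid Ω) (S : Finset ι) :
    S.inf (fun i => (r i).comap f) = (S.inf r).comap f :=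
  Setoid.ext fun x y => by
    simp only [finset_inf_setoid_apply, Setoid.comap_rel]

omit [Fintype ι] [DecidableEq ι] [Fintype Ω] in
lemma finset_inf_wordSetoid (r : ι → Setoid Ω) (n : ℕ) (S : Finset ι) :
    S.inf (fun i => wordSetoid (r i) n) = wordSetoid (S.inf r) n :=
  Setoid.ext fun x y => by
    rw [finset_inf_setoid_apply]
    change (∀ i ∈ S, ∀ k, r i (x k) (y k)) ↔ ∀ k, S.inf r (x k) (y k)
    simp only [finset_inf_setoid_apply]
    exact ⟨fun h k i hi => h i hi k, fun h i hi k => h k i hi⟩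

lemma partyEntropy_comp_equiv (e : Ω' ≃ Ω) (v : Ω → ℂ) (r : ι → Setoid Ω) (S : Finset ι) :
    partyEntropy (v ∘ e) (fun i => (r i).comap e) S = partyEntropy v r S := by
  rw [partyEntropy, finset_inf_comap e r S, finset_inf_comap e r Sᶜ, cutEntropy_comp_equiv,
    partyEntropy]

lemma partyEntropy_tensorPower {v : Ω → ℂ} (hv : star v ⬝ᵥ v = 1) {r : ι → Setoid Ω}
    (hr : Finset.univ.inf r = ⊥) (n : ℕ) (S : Finset ι) :
    partyEntropy (tensorPower v n) (fun i => wordSetoid (r i) n) S = n * partyEntropy v r S := by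
  have inf_compl : S.inf r ⊓ Sᶜ.inf r = ⊥ := by rw [← Finset.inf_union, Finset.union_compl, hr]
  rw [partyEntropy, finset_inf_wordSetoid, finset_inf_wordSetoid,
    cutEntropy_tensorPower hv inf_compl, partyEntropy]

lemma partyEntropy_coarsen {κ : Type*} [Fintype κ] [DecidableEq κ] (v : Ω → ℂ)
    {r : ι → Setoid Ω} {r' : κ → Setoid Ω} {f : ι → κ}
    (hr' : ∀ j x y, r' j x y ↔ ∀ i, f i = j → r i x y) (S : Finset κ) :
    partyEntropy v r' S = partyEntropy v r (Finset.univ.filter (f · ∈ S)) := by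
  have inf_eq (S : Finset κ) : S.inf r' = (Finset.univ.filter (f · ∈ S)).inf r :=
    Setoid.ext fun x y => by
      simp only [finset_inf_setoid_apply, Finset.mem_filter, Finset.mem_univ, true_and, hr']
      exact ⟨fun h i hi => h _ hi i rfl, fun h j hj i hij => h i (hij ▸ hj)⟩
  have compl_filter : Finset.univ.filter (f · ∈ Sᶜ) = (Finset.univ.filter (f · ∈ S))ᶜ := by
    simp only [Finset.mem_compl, Finset.compl_filter]
  rw [partyEntropy, inf_eq, inf_eq, compl_filter, partyEntropy]

/-- In the coordinates `e`, party `i₀` holds the first factor and the other parties share the second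
factor as described by `c`. -/
structure HoldsFirstFactor {Y T : Type*} (r : ι → Setoid Ω) (e : Ω ≃ Y × T) (i₀ : ι)
    (c : ι → Setoid T) : Prop where
  self : r i₀ = Setoid.ker (Prod.fst ∘ e)
  of_ne : ∀ i ≠ i₀, r i = (c i).comap (Prod.snd ∘ e)

namespace HoldsFirstFactor

variable {X Y T : Type*} {r : ι → Setoid Ω} {e : Ω ≃ Y × T} {i₀ : ι} {c : ι → Setoid T}

omit [Fintype ι] [DecidableEq ι] [Fintype Ω] in
lemma inf_of_notMem (h : HoldsFirstFactor r e i₀ c) {S : Finset ι} (hS : i₀ ∉ S) :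
    S.inf r = ((S.inf c).comap Prod.snd).comap e := by
  rw [← finset_inf_comap, ← finset_inf_comap]
  exact Finset.inf_congr rfl fun i hi => h.of_ne i (ne_of_mem_of_not_mem hi hS)

omit [Fintype ι] [Fintype Ω] in
lemma inf_of_mem (h : HoldsFirstFactor r e i₀ c) {S : Finset ι} (hS : i₀ ∈ S) :
    S.inf r =
      (Setoid.ker Prod.fst ⊓ ((S.erase i₀).inf c).comap Prod.snd).comap e := by
  nth_rw 1 [← Finset.insert_erase hS]
  rw [Finset.inf_insert, h.inf_of_notMem (Finset.notMem_erase i₀ S), h.self]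
  rfl

lemma partyEntropy_eq [Fintype Y] [Fintype T] (h : HoldsFirstFactor r e i₀ c) (v : Ω → ℂ)
    {S : Finset ι} (hS : i₀ ∈ S) :
    partyEntropy v r S =
      cutEntropy (v ∘ e.symm) (Setoid.ker Prod.fst ⊓ ((S.erase i₀).inf c).comap Prod.snd)
        ((Sᶜ.inf c).comap Prod.snd) := by
  rw [partyEntropy, h.inf_of_mem hS, h.inf_of_notMem (Finset.notMem_compl.2 hS),
    ← cutEntropy_comp_equiv e, Function.comp_assoc, e.symm_comp_self, Function.comp_id]

lemma partyEntropy_eq_of_isometry [Fintype X] [Fintype Y] [DecidableEq Y] [Finite T]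
    {r' : ι → Setoid Ω'} {e' : Ω' ≃ X × T} (h : HoldsFirstFactor r e i₀ c)
    (h' : HoldsFirstFactor r' e' i₀ c) {V : Matrix X Y ℂ} (hV : Vᴴ * V = 1) {v : Ω → ℂ}
    {u : Ω' → ℂ} (hu : u ∘ e'.symm = applyLeft V (v ∘ e.symm)) (S : Finset ι) :
    partyEntropy u r' S = partyEntropy v r S := by
  cases nonempty_fintype T
  wlog hS : i₀ ∈ S generalizing S
  · rw [← partyEntropy_compl, this Sᶜ (Finset.mem_compl.2 hS), partyEntropy_compl]
  rw [h.partyEntropy_eq v hS, h'.partyEntropy_eq u hS, hu, cutEntropy_applyLeft hV]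

end HoldsFirstFactor

lemma dotProduct_self_of_isometry {X Y T : Type*} [Fintype X] [Fintype Y] [DecidableEq Y]
    [Finite T] {e : Ω ≃ Y × T} {e' : Ω' ≃ X × T} {V : Matrix X Y ℂ} (hV : Vᴴ * V = 1)
    {v : Ω → ℂ} {u : Ω' → ℂ} (hu : u ∘ e'.symm = applyLeft V (v ∘ e.symm)) :
    star u ⬝ᵥ u = star v ⬝ᵥ v := by
  cases nonempty_fintype T
  have norm_eq := dotProduct_applyLeft hV (v ∘ e.symm)
  rw [← hu] at norm_eq
  calc star u ⬝ᵥ u = star (u ∘ e'.symm) ⬝ᵥ (u ∘ e'.symm) := (e'.symm.sum_comp _).symm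
    _ = star (v ∘ e.symm) ⬝ᵥ (v ∘ e.symm) := norm_eq
    _ = star v ⬝ᵥ v := e.symm.sum_comp fun ω => star (v ω) * v ω

end PartyEntropy

/-! ### Entropy inequalities for distributed compression -/

/-- The systems of the source: `A` and `B` are compressed, the reference is split into `E`
and `F`. -/
inductive SourceParty
  | A | B | E | F
  deriving DecidableEq

/-- The systems after encoding: each encoder turns its source into a code system, sent to the
decoder, and a waste system. -/
inductive EncodedParty
  | codeA | wasteA | codeB | wasteB | E | F
  deriving DecidableEq

/-- The systems after decoding, the two encoder wastes and the two reference systems being taken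
together. -/
inductive DecodedParty
  | output | decoderWaste | encoderWaste | reference
  deriving DecidableEq

instance : Fintype SourceParty := ⟨{.A, .B, .E, .F}, fun i => by cases i <;> decide⟩

instance : Fintype EncodedParty :=
  ⟨{.codeA, .wasteA, .codeB, .wasteB, .E, .F}, fun i => by cases i <;> decide⟩

instance : Fintype DecodedParty :=
  ⟨{.output, .decoderWaste, .encoderWaste, .reference}, fun i => by cases i <;> decide⟩

open DecodedParty in
/-- The decoder output and the reference are nearly pure together, so the reference is decoupled
from the encoder wastes. -/
lemma IsPureEntropy.mutualInfo_encoderWaste_reference_le {h : Finset DecodedParty → ℝ}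
    (hh : IsPureEntropy h) :
    mutualInfo h {encoderWaste} {reference} ≤ 2 * h {output, reference} := by
  have waste_eq : h {encoderWaste, decoderWaste} = h {output, reference} :=
    (congrArg h (by decide)).trans (hh.compl {output, reference})
  have output_eq : h {encoderWaste, decoderWaste, reference} = h {output} :=
    (congrArg h (by decide)).trans (hh.compl {output})
  have ssa := hh.submodular {encoderWaste, decoderWaste} {encoderWaste, reference}
  have reference_le := hh.le_union_add (S := {reference}) (T := {output}) (by decide)
  have cover : ({encoderWaste, decoderWaste} ∪ {encoderWaste, reference} : Finset DecodedParty) =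
    {encoderWaste, decoderWaste, reference} := by decide
  have overlap : ({encoderWaste, decoderWaste} ∩ {encoderWaste, reference} : Finset DecodedParty) =
    {encoderWaste} := by decide
  rw [cover, overlap] at ssa
  rw [Finset.union_comm, Finset.singleton_union] at reference_le
  rw [mutualInfo, Finset.singleton_union]
  linarith

namespace EncodedParty

variable {h : Finset EncodedParty → ℝ} (hh : IsPureEntropy h) {δ : ℝ}
  (hδ : mutualInfo h {wasteA, wasteB} {E, F} ≤ δ)
include hh hδ

lemma mutualInfo_A_le : mutualInfo h {codeA, wasteA} {E, F} ≤ 2 * h {codeA} + δ :=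
  calc mutualInfo h {codeA, wasteA} {E, F} ≤ 2 * h {codeA} + mutualInfo h {wasteA} {E, F} :=
        hh.mutualInfo_union_le (S := {codeA}) (S' := {wasteA}) (by decide)
    _ ≤ 2 * h {codeA} + mutualInfo h {wasteA, wasteB} {E, F} := by
        gcongr; exact hh.mutualInfo_mono (by decide) (by decide) (by decide)
    _ ≤ 2 * h {codeA} + δ := by gcongr

lemma mutualInfo_B_le : mutualInfo h {codeB, wasteB} {E, F} ≤ 2 * h {codeB} + δ :=
  calc mutualInfo h {codeB, wasteB} {E, F} ≤ 2 * h {codeB} + mutualInfo h {wasteB} {E, F} :=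
        hh.mutualInfo_union_le (S := {codeB}) (S' := {wasteB}) (by decide)
    _ ≤ 2 * h {codeB} + mutualInfo h {wasteA, wasteB} {E, F} := by
        gcongr; exact hh.mutualInfo_mono (by decide) (by decide) (by decide)
    _ ≤ 2 * h {codeB} + δ := by gcongr

lemma le_condMutualInfo_wastes_add :
    h {wasteA} + h {wasteB} - h {wasteA, wasteB} ≤
      condMutualInfo h {wasteA} {wasteB} {E} + 2 * δ := by
  have decoupled_A : mutualInfo h {wasteA} {E} ≤ δ :=
    (hh.mutualInfo_mono (by decide) (by decide) (by decide)).trans hδ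
  have decoupled_B : mutualInfo h {wasteB} {E} ≤ δ :=
    (hh.mutualInfo_mono (by decide) (by decide) (by decide)).trans hδ
  have wastes_le := hh.union_le ({wasteA} ∪ {wasteB}) {E}
  simp only [mutualInfo] at decoupled_A decoupled_B
  simp only [condMutualInfo]
  linarith! only [decoupled_A, decoupled_B, wastes_le]

lemma add_add_le_condMutualInfo_add :
    h {codeA, wasteA} + h {codeB, wasteB} + h {E, F} ≤
      condMutualInfo h {codeA, wasteA} {codeB, wasteB} {E} + 2 * h {codeA} + 2 * h {codeB} +
        3 * δ := by
  have wastes := le_condMutualInfo_wastes_add hh hδ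
  have mono : condMutualInfo h {wasteA} {wasteB} {E} ≤
      condMutualInfo h {codeA, wasteA} {codeB, wasteB} {E} :=
    hh.condMutualInfo_mono (by decide) (by decide) (by decide) _
  have A_le : h {codeA, wasteA} ≤ h {codeA} + h {wasteA} := hh.union_le {codeA} {wasteA}
  have B_le : h {codeB, wasteB} ≤ h {codeB} + h {wasteB} := hh.union_le {codeB} {wasteB}
  have codes_le : h ({wasteA, wasteB} ∪ {E, F}) ≤ h {codeA} + h {codeB} := by
    rw [← hh.compl]
    exact hh.union_le {codeA} {codeB}
  unfold mutualInfo at hδ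
  linarith

end EncodedParty

/-! ### Distributed compression of a single vector -/

/-- The systems seen by the channel and the decoder: what is sent to the decoder, the wastes of the
encoders, and the reference. -/
inductive ChannelParty
  | code | waste | reference
  deriving DecidableEq

instance : Fintype ChannelParty := ⟨{.code, .waste, .reference}, fun i => by cases i <;> decide⟩

/-- The source that an encoded system comes from. -/
def EncodedParty.source : EncodedParty → SourceParty
  | codeA | wasteA => .A
  | codeB | wasteB => .B
  | E => .E
  | F => .F

/-- The system of the channel to which an encoded system belongs. -/
def EncodedParty.channel : EncodedParty → ChannelParty
  | codeA | codeB => .code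
  | wasteA | wasteB => .waste
  | E | F => .reference

/-- The system of the channel from which a decoded system is made. -/
def DecodedParty.channel : DecodedParty → ChannelParty
  | output | decoderWaste => .code
  | encoderWaste => .waste
  | reference => .reference

section Parties

variable {X Y R WA WB Z K CA CB : Type*}

/-- The systems of the source in the coordinates `A × (B × R)`, where `E` and `F` hold the classes
of the reference modulo `e` and `f`. -/
def sourceParties (X Y : Type*) (e f : Setoid R) : SourceParty → Setoid (X × (Y × R))
  | .A => Setoid.ker Prod.fst
  | .B => Setoid.ker fun p => p.2.1
  | .E => e.comap fun p => p.2.2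
  | .F => f.comap fun p => p.2.2

/-- The encoded systems in the coordinates `(C_A × W_A) × ((C_B × W_B) × R)`. -/
def encodedParties (CA WA CB WB : Type*) (e f : Setoid R) :
    EncodedParty → Setoid ((CA × WA) × ((CB × WB) × R))
  | .codeA => Setoid.ker fun p => p.1.1
  | .wasteA => Setoid.ker fun p => p.1.2
  | .codeB => Setoid.ker fun p => p.2.1.1
  | .wasteB => Setoid.ker fun p => p.2.1.2
  | .E => e.comap fun p => p.2.2
  | .F => f.comap fun p => p.2.2

/-- The systems of the channel in the coordinates `X × (R × W)`. -/
def channelParties (X R W : Type*) : ChannelParty → Setoid (X × (R × W))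
  | .code => Setoid.ker Prod.fst
  | .waste => Setoid.ker fun p => p.2.2
  | .reference => Setoid.ker fun p => p.2.1

/-- The decoded systems in the coordinates `(Z × W_C) × (R × (W_A × W_B))`, where `Z` is the output
of the decoder. -/
def decodedParties (Z K R W : Type*) : DecodedParty → Setoid ((Z × K) × (R × W))
  | .output => Setoid.ker fun p => p.1.1
  | .decoderWaste => Setoid.ker fun p => p.1.2
  | .encoderWaste => Setoid.ker fun p => p.2.2
  | .reference => Setoid.ker fun p => p.2.1

lemma sourceParties_iff_forall_encodedParties (e f : Setoid R) (j : SourceParty)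
    (x y : (CA × WA) × ((CB × WB) × R)) :
    sourceParties (CA × WA) (CB × WB) e f j x y ↔
      ∀ i, EncodedParty.source i = j → encodedParties CA WA CB WB e f i x y := by
  constructor
  · rintro h (_ | _) rfl
    exacts [congrArg Prod.fst h, congrArg Prod.snd h, congrArg Prod.fst h, congrArg Prod.snd h,
      h, h]
  · intro h
    cases j
    exacts [Prod.ext (h .codeA rfl) (h .wasteA rfl), Prod.ext (h .codeB rfl) (h .wasteB rfl),
      h .E rfl, h .F rfl]

lemma channelParties_iff_forall_decodedParties (j : ChannelParty) (x y : (Z × K) × (R × W)) :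
    channelParties (Z × K) R W j x y ↔
      ∀ i, DecodedParty.channel i = j → decodedParties Z K R W i x y := by
  constructor
  · rintro h (_ | _) rfl
    exacts [congrArg Prod.fst h, congrArg Prod.snd h, h, h]
  · intro h
    cases j
    exacts [Prod.ext (h .output rfl) (h .decoderWaste rfl), h .encoderWaste rfl, h .reference rfl]

/-- Exchange of the order of the first two of three systems. -/
def prodLeftComm (X Y R : Type*) : X × (Y × R) ≃ Y × (X × R) where
  toFun p := (p.2.1, (p.1, p.2.2))
  invFun p := (p.2.1, (p.1, p.2.2))

/-- Collection of the encoded systems into those of the channel. -/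
def channelEquiv (CA WA CB WB R : Type*) :
    (CA × WA) × ((CB × WB) × R) ≃ (CA × CB) × (R × (WA × WB)) where
  toFun p := ((p.1.1, p.2.1.1), (p.2.2, (p.1.2, p.2.1.2)))
  invFun p := ((p.1.1, p.2.2.1), ((p.1.2, p.2.2.2), p.2.1))

lemma channelParties_iff_forall_encodedParties {e f : Setoid R} (hef : e ⊓ f = ⊥)
    (j : ChannelParty) (x y : (CA × WA) × ((CB × WB) × R)) :
    (channelParties (CA × CB) R (WA × WB) j).comap (channelEquiv CA WA CB WB R) x y ↔
      ∀ i, EncodedParty.channel i = j → encodedParties CA WA CB WB e f i x y := by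
  constructor
  · rintro h (_ | _) rfl
    exacts [(Prod.ext_iff.1 h).1, (Prod.ext_iff.1 h).1, (Prod.ext_iff.1 h).2,
      (Prod.ext_iff.1 h).2, ((Setoid.ext_iff.1 hef _ _).2 h).1, ((Setoid.ext_iff.1 hef _ _).2 h).2]
  · intro h
    cases j
    exacts [Prod.ext (h .codeA rfl) (h .codeB rfl), Prod.ext (h .wasteA rfl) (h .wasteB rfl),
      (Setoid.ext_iff.1 hef _ _).1 ⟨h .E rfl, h .F rfl⟩]

lemma holdsFirstFactor_sourceParties_A (e f : Setoid R) :
    HoldsFirstFactor (sourceParties X Y e f) (Equiv.refl _) .A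
      (fun i => (sourceParties Unit Y e f i).comap fun q => ((), q)) where
  self := rfl
  of_ne := by
    rintro (_ | _) h
    exacts [absurd rfl h, rfl, rfl, rfl]

lemma holdsFirstFactor_sourceParties_B (e f : Setoid R) :
    HoldsFirstFactor (sourceParties X Y e f) (prodLeftComm X Y R) .B
      (fun i => (sourceParties X Unit e f i).comap fun q => (q.1, ((), q.2))) where
  self := rfl
  of_ne := by
    rintro (_ | _) h
    exacts [rfl, absurd rfl h, rfl, rfl]

lemma holdsFirstFactor_channelParties :
    HoldsFirstFactor (channelParties X R W) (Equiv.refl _) .code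
      (fun i => (channelParties Unit R W i).comap fun q => ((), q)) where
  self := rfl
  of_ne := by
    rintro (_ | _) h
    exacts [absurd rfl h, rfl, rfl]

lemma inf_encodedParties {e f : Setoid R} (hef : e ⊓ f = ⊥) :
    Finset.univ.inf (encodedParties CA WA CB WB e f) = ⊥ := by
  refine eq_bot_iff.2 fun x y h => ?_
  have h (i) := (finset_inf_setoid_apply _ _ x y).1 h i (Finset.mem_univ i)
  exact Prod.ext (Prod.ext (h .codeA) (h .wasteA)) (Prod.ext (Prod.ext (h .codeB) (h .wasteB))
    ((Setoid.ext_iff.1 hef _ _).1 ⟨h .E, h .F⟩))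

lemma inf_decodedParties : Finset.univ.inf (decodedParties Z K R W) = ⊥ := by
  refine eq_bot_iff.2 fun x y h => ?_
  have h (i) := (finset_inf_setoid_apply _ _ x y).1 h i (Finset.mem_univ i)
  exact Prod.ext (Prod.ext (h .output) (h .decoderWaste))
    (Prod.ext (h .reference) (h .encoderWaste))

end Parties

section Code

variable {X Y R CA WA CB WB Z K : Type*} [Fintype X] [Fintype Y] [Fintype R] [Fintype CA]
  [Fintype CB] [Fintype WA] [Fintype WB] [Fintype Z] [Fintype K]

/-- The operator `V` applied to the second of three systems. -/
def applyMiddle {X' Y' : Type*} (V : Matrix Y' Y ℂ) (ψ : X' × (Y × R) → ℂ) : X' × (Y' × R) → ℂ :=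
  applyLeft V (ψ ∘ (prodLeftComm X' Y R).symm) ∘ prodLeftComm X' Y' R

/-- The vector obtained from `ψ` by the encoders `EA` and `EB`. -/
def encodedVec (EA : Matrix (CA × WA) X ℂ) (EB : Matrix (CB × WB) Y ℂ) (ψ : X × (Y × R) → ℂ) :
    (CA × WA) × ((CB × WB) × R) → ℂ :=
  applyLeft EA (applyMiddle EB ψ)

/-- The vector obtained from `ψ` by the encoders `EA` and `EB` and the decoder `D`. -/
def decodedVec (EA : Matrix (CA × WA) X ℂ) (EB : Matrix (CB × WB) Y ℂ)
    (D : Matrix (Z × K) (CA × CB) ℂ) (ψ : X × (Y × R) → ℂ) : (Z × K) × (R × (WA × WB)) → ℂ :=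
  applyLeft D (encodedVec EA EB ψ ∘ (channelEquiv CA WA CB WB R).symm)

variable [DecidableEq X] [DecidableEq Y] {EA : Matrix (CA × WA) X ℂ}
  {EB : Matrix (CB × WB) Y ℂ} {D : Matrix (Z × K) (CA × CB) ℂ} (hEA : EAᴴ * EA = 1)
  (hEB : EBᴴ * EB = 1) (ψ : X × (Y × R) → ℂ)

section Encoders

include hEA hEB

lemma dotProduct_encodedVec :
    star (encodedVec EA EB ψ) ⬝ᵥ encodedVec EA EB ψ = star ψ ⬝ᵥ ψ := by
  rw [encodedVec, dotProduct_applyLeft hEA]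
  exact dotProduct_self_of_isometry (e := prodLeftComm X Y R)
    (e' := prodLeftComm X (CB × WB) R) hEB (u := applyMiddle EB ψ) rfl

lemma partyEntropy_encodedVec (e f : Setoid R) (S : Finset SourceParty) :
    partyEntropy (encodedVec EA EB ψ) (sourceParties (CA × WA) (CB × WB) e f) S =
      partyEntropy ψ (sourceParties X Y e f) S := by
  refine Eq.trans ?_ ((holdsFirstFactor_sourceParties_B e f).partyEntropy_eq_of_isometry
    (holdsFirstFactor_sourceParties_B e f) hEB (u := applyMiddle EB ψ) rfl S)
  exact (holdsFirstFactor_sourceParties_A e f).partyEntropy_eq_of_isometry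
    (holdsFirstFactor_sourceParties_A e f) hEA rfl S

lemma partyEntropy_encodedVec_encodedParties (e f : Setoid R) (S : Finset SourceParty) :
    partyEntropy (encodedVec EA EB ψ) (encodedParties CA WA CB WB e f)
        (Finset.univ.filter (EncodedParty.source · ∈ S)) =
      partyEntropy ψ (sourceParties X Y e f) S := by
  rw [← partyEntropy_encodedVec hEA hEB,
    partyEntropy_coarsen _ (sourceParties_iff_forall_encodedParties e f)]

lemma mutualInfo_encodedVec_A (e f : Setoid R) :
    mutualInfo (partyEntropy (encodedVec EA EB ψ) (encodedParties CA WA CB WB e f))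
      {.codeA, .wasteA} {.E, .F} =
    mutualInfo (partyEntropy ψ (sourceParties X Y e f)) {.A} {.E, .F} := by
  simp only [mutualInfo, ← partyEntropy_encodedVec_encodedParties hEA hEB]
  rfl

lemma mutualInfo_encodedVec_B (e f : Setoid R) :
    mutualInfo (partyEntropy (encodedVec EA EB ψ) (encodedParties CA WA CB WB e f))
      {.codeB, .wasteB} {.E, .F} =
    mutualInfo (partyEntropy ψ (sourceParties X Y e f)) {.B} {.E, .F} := by
  simp only [mutualInfo, ← partyEntropy_encodedVec_encodedParties hEA hEB]
  rfl

lemma add_add_sub_condMutualInfo_encodedVec (e f : Setoid R) :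
    partyEntropy (encodedVec EA EB ψ) (encodedParties CA WA CB WB e f) {.codeA, .wasteA} +
        partyEntropy (encodedVec EA EB ψ) (encodedParties CA WA CB WB e f) {.codeB, .wasteB} +
        partyEntropy (encodedVec EA EB ψ) (encodedParties CA WA CB WB e f) {.E, .F} -
        condMutualInfo (partyEntropy (encodedVec EA EB ψ) (encodedParties CA WA CB WB e f))
          {.codeA, .wasteA} {.codeB, .wasteB} {.E} =
      partyEntropy ψ (sourceParties X Y e f) {.A} + partyEntropy ψ (sourceParties X Y e f) {.B} +
        partyEntropy ψ (sourceParties X Y e f) {.E, .F} -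
        condMutualInfo (partyEntropy ψ (sourceParties X Y e f)) {.A} {.B} {.E} := by
  simp only [condMutualInfo, ← partyEntropy_encodedVec_encodedParties hEA hEB]
  rfl

end Encoders

section OneShot

variable (hEA : EAᴴ * EA = 1) (hEB : EBᴴ * EB = 1) {ψ : X × (Y × R) → ℂ}
  (hψ : star ψ ⬝ᵥ ψ = 1) {e f : Setoid R} (hef : e ⊓ f = ⊥) {δ : ℝ}
  (hδ : mutualInfo (partyEntropy (encodedVec EA EB ψ) (encodedParties CA WA CB WB e f))
    {.wasteA, .wasteB} {.E, .F} ≤ δ)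
include hEA hEB hψ hef hδ

lemma mutualInfo_A_le_logb_card :
    mutualInfo (partyEntropy ψ (sourceParties X Y e f)) {.A} {.E, .F} ≤
      2 * Real.logb 2 (Fintype.card CA) + δ := by
  have norm_encoded := (dotProduct_encodedVec hEA hEB ψ).trans hψ
  rw [← mutualInfo_encodedVec_A hEA hEB]
  refine (EncodedParty.mutualInfo_A_le
    (isPureEntropy_partyEntropy norm_encoded (inf_encodedParties hef)) hδ).trans ?_
  gcongr
  exact partyEntropy_le_logb_card norm_encoded (inf_encodedParties hef) rfl

lemma mutualInfo_B_le_logb_card :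
    mutualInfo (partyEntropy ψ (sourceParties X Y e f)) {.B} {.E, .F} ≤
      2 * Real.logb 2 (Fintype.card CB) + δ := by
  have norm_encoded := (dotProduct_encodedVec hEA hEB ψ).trans hψ
  rw [← mutualInfo_encodedVec_B hEA hEB]
  refine (EncodedParty.mutualInfo_B_le
    (isPureEntropy_partyEntropy norm_encoded (inf_encodedParties hef)) hδ).trans ?_
  gcongr
  exact partyEntropy_le_logb_card norm_encoded (inf_encodedParties hef) rfl

lemma sub_condMutualInfo_le_logb_card :
    partyEntropy ψ (sourceParties X Y e f) {.A} + partyEntropy ψ (sourceParties X Y e f) {.B} +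
        partyEntropy ψ (sourceParties X Y e f) {.E, .F} -
        condMutualInfo (partyEntropy ψ (sourceParties X Y e f)) {.A} {.B} {.E} ≤
      2 * Real.logb 2 (Fintype.card CA) + 2 * Real.logb 2 (Fintype.card CB) + 3 * δ := by
  have norm_encoded := (dotProduct_encodedVec hEA hEB ψ).trans hψ
  have codeA_le : partyEntropy (encodedVec EA EB ψ) (encodedParties CA WA CB WB e f) {.codeA} ≤
      Real.logb 2 (Fintype.card CA) :=
    partyEntropy_le_logb_card norm_encoded (inf_encodedParties hef) rfl
  have codeB_le : partyEntropy (encodedVec EA EB ψ) (encodedParties CA WA CB WB e f) {.codeB} ≤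
      Real.logb 2 (Fintype.card CB) :=
    partyEntropy_le_logb_card norm_encoded (inf_encodedParties hef) rfl
  have bound := EncodedParty.add_add_le_condMutualInfo_add
    (isPureEntropy_partyEntropy norm_encoded (inf_encodedParties hef)) hδ
  rw [← add_add_sub_condMutualInfo_encodedVec hEA hEB]
  linarith

end OneShot

variable [DecidableEq CA] [DecidableEq CB] (hD : Dᴴ * D = 1)

omit [DecidableEq X] [DecidableEq Y] in
include hD in
lemma mutualInfo_decodedVec {e f : Setoid R} (hef : e ⊓ f = ⊥) :
    mutualInfo (partyEntropy (decodedVec EA EB D ψ) (decodedParties Z K R (WA × WB)))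
      {.encoderWaste} {.reference} =
    mutualInfo (partyEntropy (encodedVec EA EB ψ) (encodedParties CA WA CB WB e f))
      {.wasteA, .wasteB} {.E, .F} := by
  have entropy_eq (S : Finset ChannelParty) :
      partyEntropy (decodedVec EA EB D ψ) (decodedParties Z K R (WA × WB))
        (Finset.univ.filter (DecodedParty.channel · ∈ S)) =
      partyEntropy (encodedVec EA EB ψ) (encodedParties CA WA CB WB e f)
        (Finset.univ.filter (EncodedParty.channel · ∈ S)) := by
    rw [← partyEntropy_coarsen _ (channelParties_iff_forall_encodedParties hef),
      ← partyEntropy_coarsen _ channelParties_iff_forall_decodedParties]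
    refine (holdsFirstFactor_channelParties.partyEntropy_eq_of_isometry
      holdsFirstFactor_channelParties hD
      (v := encodedVec EA EB ψ ∘ (channelEquiv CA WA CB WB R).symm) rfl S).trans ?_
    rw [← partyEntropy_comp_equiv (channelEquiv CA WA CB WB R)]
    rfl
  have waste := entropy_eq {.waste}
  have reference := entropy_eq {.reference}
  have both := entropy_eq {.waste, .reference}
  exact congrArg₂ _ (congrArg₂ _ waste reference) both

lemma dotProduct_decodedVec (hEA : EAᴴ * EA = 1) (hEB : EBᴴ * EB = 1) (hD : Dᴴ * D = 1) :
    star (decodedVec EA EB D ψ) ⬝ᵥ decodedVec EA EB D ψ = star ψ ⬝ᵥ ψ := by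
  rw [decodedVec, dotProduct_applyLeft hD, ← dotProduct_encodedVec hEA hEB]
  exact (channelEquiv CA WA CB WB R).symm.sum_comp
    fun p => star (encodedVec EA EB ψ p) * encodedVec EA EB ψ p

/-- Separation of the decoder output and the reference from the wastes. -/
def outputEquiv (Z K R W : Type*) : (Z × K) × (R × W) ≃ (R × Z) × (W × K) where
  toFun p := ((p.2.1, p.1.1), (p.2.2, p.1.2))
  invFun p := ((p.1.2, p.2.2), (p.1.1, p.2.1))

lemma partyEntropy_decodedVec_le (hEA : EAᴴ * EA = 1) (hEB : EBᴴ * EB = 1) (hD : Dᴴ * D = 1)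
    {ψ : X × (Y × R) → ℂ} (hψ : star ψ ⬝ᵥ ψ = 1) {ξ : R × Z → ℂ} (hξ : star ξ ⬝ᵥ ξ = 1) {ε : ℝ}
    (hε : 1 - ε ≤ (star ξ ⬝ᵥ ((coordMatrix (outputEquiv Z K R (WA × WB)) (decodedVec EA EB D ψ) *
      (coordMatrix (outputEquiv Z K R (WA × WB)) (decodedVec EA EB D ψ))ᴴ) *ᵥ ξ)).re) :
    partyEntropy (decodedVec EA EB D ψ) (decodedParties Z K R (WA × WB)) {.output, .reference} ≤
      1 + ε * Real.logb 2 (Fintype.card (R × Z)) := by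
  have output_reference : ({.output, .reference} : Finset DecodedParty).inf
      (decodedParties Z K R (WA × WB)) = Setoid.ker (Prod.fst ∘ outputEquiv Z K R (WA × WB)) := by
    rw [Finset.inf_insert, Finset.inf_singleton, inf_comm]
    exact (ker_prodMk _ _).symm
  have wastes : ({.output, .reference}ᶜ : Finset DecodedParty).inf
      (decodedParties Z K R (WA × WB)) = Setoid.ker (Prod.snd ∘ outputEquiv Z K R (WA × WB)) := by
    have compl_eq : ({.output, .reference}ᶜ : Finset DecodedParty) =
      {.encoderWaste, .decoderWaste} := by decide
    rw [compl_eq, Finset.inf_insert, Finset.inf_singleton]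
    exact (ker_prodMk _ _).symm
  rw [partyEntropy, output_reference, wastes]
  exact cutEntropy_le_of_one_sub_le_fidelity _
    ((dotProduct_decodedVec ψ hEA hEB hD).trans hψ) hξ hε

lemma mutualInfo_wastes_le (hEA : EAᴴ * EA = 1) (hEB : EBᴴ * EB = 1) (hD : Dᴴ * D = 1)
    {ψ : X × (Y × R) → ℂ} (hψ : star ψ ⬝ᵥ ψ = 1) {e f : Setoid R} (hef : e ⊓ f = ⊥)
    {ξ : R × Z → ℂ} (hξ : star ξ ⬝ᵥ ξ = 1) {ε : ℝ}
    (hε : 1 - ε ≤ (star ξ ⬝ᵥ ((coordMatrix (outputEquiv Z K R (WA × WB)) (decodedVec EA EB D ψ) *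
      (coordMatrix (outputEquiv Z K R (WA × WB)) (decodedVec EA EB D ψ))ᴴ) *ᵥ ξ)).re) :
    mutualInfo (partyEntropy (encodedVec EA EB ψ) (encodedParties CA WA CB WB e f))
      {.wasteA, .wasteB} {.E, .F} ≤ 2 * (1 + ε * Real.logb 2 (Fintype.card (R × Z))) := by
  have pure_decoded := isPureEntropy_partyEntropy
    ((dotProduct_decodedVec ψ hEA hEB hD).trans hψ) inf_decodedParties
  rw [← mutualInfo_decodedVec ψ hD hef]
  refine pure_decoded.mutualInfo_encoderWaste_reference_le.trans ?_
  gcongr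
  exact partyEntropy_decodedVec_le hEA hEB hD hψ hξ hε

end Code

/-! ### Fidelity of a code -/

section Fidelity

variable {ιA ιB ιR X Y γA γB ωA ωB ωC : Type} [Fintype γA] [Fintype γB]

/-- The Kraus operator of the code given by `EA`, `EB` and `D` for the outcome `w` of a measurement
of its wastes. -/
def krausOperator (EA : Matrix (γA × ωA) X ℂ) (EB : Matrix (γB × ωB) Y ℂ)
    (D : Matrix ((X × Y) × ωC) (γA × γB) ℂ) (w : (ωA × ωB) × ωC) : Matrix (X × Y) (X × Y) ℂ :=
  Matrix.of fun z z' =>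
    ∑ cA : γA, ∑ cB : γB, D (z, w.2) (cA, cB) * EA (cA, w.1.1) z'.1 * EB (cB, w.1.2) z'.2

lemma decodedVec_apply [Fintype X] [Fintype Y] {R : Type} (EA : Matrix (γA × ωA) X ℂ)
    (EB : Matrix (γB × ωB) Y ℂ) (D : Matrix ((X × Y) × ωC) (γA × γB) ℂ) (ψ : X × (Y × R) → ℂ)
    (z : X × Y) (k : ωC) (r : R) (w : ωA × ωB) :
    decodedVec EA EB D ψ ((z, k), (r, w)) =
      (krausOperator EA EB D (w, k) *ᵥ fun z' => ψ (z'.1, (z'.2, r))) z := by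
  have encoded (cA : γA) (cB : γB) :
      encodedVec EA EB ψ ((cA, w.1), ((cB, w.2), r)) =
        ∑ z' : X × Y, EA (cA, w.1) z'.1 * EB (cB, w.2) z'.2 * ψ (z'.1, (z'.2, r)) := by
    simp only [Fintype.sum_prod_type, mul_assoc, ← Finset.mul_sum]
    rfl
  calc
    _ = ∑ c : γA × γB, D (z, k) c * encodedVec EA EB ψ ((c.1, w.1), ((c.2, w.2), r)) := rfl
    _ = ∑ c : γA × γB, ∑ z' : X × Y, D (z, k) c * EA (c.1, w.1) z'.1 * EB (c.2, w.2) z'.2 *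
          ψ (z'.1, (z'.2, r)) := by simp only [encoded, Finset.mul_sum, mul_assoc]
    _ = ∑ z' : X × Y, (∑ c : γA × γB, D (z, k) c * EA (c.1, w.1) z'.1 * EB (c.2, w.2) z'.2) *
          ψ (z'.1, (z'.2, r)) := by
      simp only [Finset.sum_comm (s := Finset.univ (α := γA × γB)), Finset.sum_mul]
    _ = _ := by simp only [Fintype.sum_prod_type (γ := ℂ) (α₁ := γA)]; rfl

variable {n : ℕ} (EA : Matrix (γA × ωA) (Fin n → ιA) ℂ) (EB : Matrix (γB × ωB) (Fin n → ιB) ℂ)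
  (D : Matrix (((Fin n → ιA) × (Fin n → ιB)) × ωC) (γA × γB) ℂ) [Fintype ιA] [Fintype ιB]
  [Fintype ιR]

lemma codeMap_mulVec_apply [DecidableEq ιR]
    (ψ : (Fin n → ιR) × ((Fin n → ιA) × (Fin n → ιB)) → ℂ) (r : Fin n → ιR)
    (z : (Fin n → ιA) × (Fin n → ιB)) (w : (ωA × ωB) × ωC) :
    (codeMap EA EB D *ᵥ ψ) ((r, z), w) = (krausOperator EA EB D w *ᵥ fun z' => ψ (r, z')) z := by
  calc
    _ = ∑ q, (if r = q.1 then krausOperator EA EB D w z q.2 else 0) * ψ q := rfl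
    _ = _ := by
      rw [Fintype.sum_prod_type_right]
      simp only [ite_mul, zero_mul, Finset.sum_ite_eq, Finset.mem_univ, if_true]
      rfl

variable [Fintype ωA] [Fintype ωB] [Fintype ωC]

/-- The output of the code on `n` copies of `φ`, as a matrix between the decoded systems with the
reference and the wastes. -/
noncomputable def outputMatrix (φ : ιA × (ιB × ιR) → ℂ) :
    Matrix ((Fin n → ιR) × ((Fin n → ιA) × (Fin n → ιB))) ((ωA × ωB) × ωC) ℂ :=
  Matrix.of fun p w => (krausOperator EA EB D w *ᵥ fun z => iidVec φ n (p.1, z)) p.2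

lemma codeFidelity_eq_outputMatrix [DecidableEq ιR] (φ : ιA × (ιB × ιR) → ℂ) :
    codeFidelity φ EA EB D = (star (iidVec φ n) ⬝ᵥ
      ((outputMatrix EA EB D φ * (outputMatrix EA EB D φ)ᴴ) *ᵥ iidVec φ n)).re := by
  rw [codeFidelity]
  congr 4
  ext p q
  rw [of_apply, mul_apply]
  refine Finset.sum_congr rfl fun w _ => ?_
  rw [mul_vecMulVec, vecMulVec_mul, ← star_mulVec, vecMulVec_apply, Pi.star_apply,
    codeMap_mulVec_apply, codeMap_mulVec_apply]
  rfl

lemma re_dotProduct_mul_conjTranspose_mulVec {P Q : Type*} [Fintype P] [Fintype Q]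
    (M : Matrix P Q ℂ) (v : P → ℂ) :
    (star v ⬝ᵥ ((M * Mᴴ) *ᵥ v)).re = ∑ q, Complex.normSq ((star v ᵥ* M) q) := by
  rw [← mulVec_mulVec, dotProduct_mulVec, dotProduct, Complex.re_sum]
  refine Finset.sum_congr rfl fun q _ => ?_
  have conj_eq : Mᴴ *ᵥ v = star (star v ᵥ* M) := by rw [star_vecMul, star_star]
  rw [conj_eq, Pi.star_apply, RCLike.star_def, Complex.mul_conj, Complex.ofReal_re]

/-- The reduced state on `A^{⊗n} ⊗ B^{⊗n}` of `n` copies of `φ`. -/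
noncomputable def iidRedAB (φ : ιA × (ιB × ιR) → ℂ) (n : ℕ) :
    Matrix ((Fin n → ιA) × (Fin n → ιB)) ((Fin n → ιA) × (Fin n → ιB)) ℂ :=
  Matrix.of fun z z' => ∏ k, redAB φ (z.1 k, z.2 k) (z'.1 k, z'.2 k)

omit [Fintype ιA] [Fintype ιB] in
lemma iidRedAB_apply (φ : ιA × (ιB × ιR) → ℂ) (z z' : (Fin n → ιA) × (Fin n → ιB)) :
    iidRedAB φ n z z' = ∑ r, iidVec φ n (r, z) * star (iidVec φ n (r, z')) := by
  simp only [iidRedAB, redAB, of_apply, iidVec, star_prod, ← Finset.prod_mul_distrib]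
  exact Fintype.prod_sum _

/-- The entanglement fidelity of a channel is determined by its Kraus operators and the reduced
state it acts on. -/
lemma codeFidelity_eq_sum_normSq [DecidableEq ιR] (φ : ιA × (ιB × ιR) → ℂ) :
    codeFidelity φ EA EB D =
      ∑ w, Complex.normSq (krausOperator EA EB D w * iidRedAB φ n).trace := by
  rw [codeFidelity_eq_outputMatrix, re_dotProduct_mul_conjTranspose_mulVec]
  refine Finset.sum_congr rfl fun w _ => congrArg _ ?_
  simp only [Matrix.trace, diag_apply, mul_apply, iidRedAB_apply, Finset.mul_sum]
  calc
    _ = ∑ p : _ × _, star (iidVec φ n p) *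
          ∑ z', krausOperator EA EB D w p.2 z' * iidVec φ n (p.1, z') := rfl
    _ = ∑ z, ∑ r, ∑ z', star (iidVec φ n (r, z)) *
          (krausOperator EA EB D w z z' * iidVec φ n (r, z')) := by
      simp only [Fintype.sum_prod_type_right (α₁ := Fin n → ιR) (γ := ℂ), Finset.mul_sum]
    _ = _ := by
      refine Finset.sum_congr rfl fun z _ => Finset.sum_comm.trans ?_
      refine Finset.sum_congr rfl fun z' _ => Finset.sum_congr rfl fun r _ => ?_
      ring

end Fidelity

lemma achievable_of_redAB_eq {ιA ιB ιR ιS : Type} [Fintype ιA] [DecidableEq ιA] [Fintype ιB]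
    [DecidableEq ιB] [Fintype ιR] [DecidableEq ιR] [Fintype ιS] [DecidableEq ιS]
    {φ : ιA × (ιB × ιR) → ℂ} {χ : ιA × (ιB × ιS) → ℂ} (h : redAB φ = redAB χ) {QA QB : ℝ}
    (hφ : achievable φ QA QB) : achievable χ QA QB := by
  simpa only [achievable, codeFidelity_eq_sum_normSq, iidRedAB, h] using hφ

/-! ### Single-letter bounds -/

lemma setoid_and_iff_eq {R : Type*} {e f : Setoid R} (hef : e ⊓ f = ⊥) {x y : R} :
    e x y ∧ f x y ↔ x = y :=
  Setoid.ext_iff.1 hef x y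

section Words

variable {A B R : Type*}

/-- The words over a product are the triples of words over the factors. -/
def wordEquiv (A B R : Type*) (n : ℕ) :
    (Fin n → A) × ((Fin n → B) × (Fin n → R)) ≃ (Fin n → A × (B × R)) where
  toFun p k := (p.1 k, (p.2.1 k, p.2.2 k))
  invFun ω := (fun k => (ω k).1, (fun k => (ω k).2.1, fun k => (ω k).2.2))

/-- The vector `φ^{⊗n}` in the coordinates `A^n × (B^n × R^n)`. -/
def wordVec (φ : A × (B × R) → ℂ) (n : ℕ) :
    (Fin n → A) × ((Fin n → B) × (Fin n → R)) → ℂ :=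
  tensorPower φ n ∘ wordEquiv A B R n

lemma inf_sourceParties {e f : Setoid R} (hef : e ⊓ f = ⊥) :
    Finset.univ.inf (sourceParties A B e f) = ⊥ := by
  refine eq_bot_iff.2 fun x y h => ?_
  have h (i) := (finset_inf_setoid_apply _ _ x y).1 h i (Finset.mem_univ i)
  exact Prod.ext (h .A) (Prod.ext (h .B) ((setoid_and_iff_eq hef).1 ⟨h .E, h .F⟩))

lemma wordSetoid_inf_wordSetoid {e f : Setoid R} (hef : e ⊓ f = ⊥) (n : ℕ) :
    wordSetoid e n ⊓ wordSetoid f n = ⊥ :=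
  eq_bot_iff.2 fun _ _ h => funext fun k => (setoid_and_iff_eq hef).1 ⟨h.1 k, h.2 k⟩

variable [Fintype A] [Fintype B] [Fintype R] {φ : A × (B × R) → ℂ} (hφ : star φ ⬝ᵥ φ = 1)
include hφ

lemma dotProduct_wordVec (n : ℕ) : star (wordVec φ n) ⬝ᵥ wordVec φ n = 1 :=
  ((wordEquiv A B R n).sum_comp fun ω => star (tensorPower φ n ω) * tensorPower φ n ω).trans
    (dotProduct_tensorPower hφ n)

lemma partyEntropy_wordVec {e f : Setoid R} (hef : e ⊓ f = ⊥) (n : ℕ) (S : Finset SourceParty) :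
    partyEntropy (wordVec φ n) (sourceParties _ _ (wordSetoid e n) (wordSetoid f n)) S =
      n * partyEntropy φ (sourceParties A B e f) S := by
  rw [← partyEntropy_tensorPower hφ (inf_sourceParties hef),
    ← partyEntropy_comp_equiv (wordEquiv A B R n)]
  congr 1
  funext i
  cases i
  exacts [Setoid.ext fun _ _ => funext_iff, Setoid.ext fun _ _ => funext_iff, rfl, rfl]

end Words

lemma le_of_forall_nat_mul_le {x y c L : ℝ}
    (h : ∀ ε : ℝ, 0 < ε → ∃ N : ℕ, ∀ n : ℕ, N ≤ n → n * x ≤ n * y + c * (1 + ε * (n * L))) :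
    x ≤ y := by
  have le_add (ε : ℝ) (hε : 0 < ε) : x ≤ y + c * (0 + ε * L) := by
    obtain ⟨N, hN⟩ := h ε hε
    refine ge_of_tendsto (tendsto_const_nhds.add (tendsto_const_nhds.mul
      (tendsto_one_div_atTop_nhds_zero_nat.add tendsto_const_nhds))) ?_
    filter_upwards [Filter.eventually_ge_atTop N, Filter.eventually_gt_atTop 0] with n hn hn0
    have n_pos : (0 : ℝ) < n := Nat.cast_pos.2 hn0
    refine le_of_mul_le_mul_left ((hN n hn).trans_eq ?_) n_pos
    field_simp
  have tendsto_zero : Filter.Tendsto (fun ε : ℝ => y + c * (0 + ε * L)) (nhdsWithin 0 (Set.Ioi 0))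
      (nhds (y + c * (0 + 0 * L))) :=
    (Continuous.tendsto (by fun_prop) 0).mono_left nhdsWithin_le_nhds
  have le_limit := ge_of_tendsto tendsto_zero (eventually_nhdsWithin_of_forall le_add)
  linarith

section SingleLetter

variable {A B R : Type} [Fintype A] [Fintype B] {φ : A × (B × R) → ℂ}

lemma outputMatrix_eq_coordMatrix {n : ℕ} {CA WA CB WB WC : Type} [Fintype CA] [Fintype CB]
    (EA : Matrix (CA × WA) (Fin n → A) ℂ) (EB : Matrix (CB × WB) (Fin n → B) ℂ)
    (D : Matrix (((Fin n → A) × (Fin n → B)) × WC) (CA × CB) ℂ) :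
    outputMatrix EA EB D φ =
      coordMatrix (outputEquiv _ WC (Fin n → R) (WA × WB)) (decodedVec EA EB D (wordVec φ n)) := by
  ext p q
  exact (decodedVec_apply EA EB D (wordVec φ n) p.2 q.2 p.1 q.1).symm

variable [Fintype R]

lemma dotProduct_iidVec (hφ : star φ ⬝ᵥ φ = 1) (n : ℕ) : star (iidVec φ n) ⬝ᵥ iidVec φ n = 1 := by
  rw [← dotProduct_wordVec hφ n]
  exact Fintype.sum_equiv ⟨fun p => (p.2.1, (p.2.2, p.1)), fun p => (p.2.2, (p.1, p.2.1)),
    fun _ => rfl, fun _ => rfl⟩ _ _ fun _ => rfl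

lemma logb_card_words (n : ℕ) :
    Real.logb 2 (Fintype.card ((Fin n → R) × ((Fin n → A) × (Fin n → B)))) =
      n * Real.logb 2 (Fintype.card (R × (A × B))) := by
  simp only [Fintype.card_prod, Fintype.card_pi, Finset.prod_const, Finset.card_univ,
    Fintype.card_fin, ← mul_pow, Nat.cast_pow, Real.logb_pow]

variable [DecidableEq A] [DecidableEq B] [DecidableEq R] (hφ : star φ ⬝ᵥ φ = 1)
  {e f : Setoid R} (hef : e ⊓ f = ⊥) {QA QB : ℝ} (hach : achievable φ QA QB)
include hφ hef hach

lemma exists_forall_nat_mul_le {ε : ℝ} (hε : 0 < ε) : ∃ N : ℕ, ∀ n : ℕ, N ≤ n →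
    n * mutualInfo (partyEntropy φ (sourceParties A B e f)) {.A} {.E, .F} ≤
      n * (2 * QA) + 2 * (1 + ε * (n * Real.logb 2 (Fintype.card (R × (A × B))))) ∧
    n * mutualInfo (partyEntropy φ (sourceParties A B e f)) {.B} {.E, .F} ≤
      n * (2 * QB) + 2 * (1 + ε * (n * Real.logb 2 (Fintype.card (R × (A × B))))) ∧
    n * (partyEntropy φ (sourceParties A B e f) {.A} + partyEntropy φ (sourceParties A B e f) {.B} +
        partyEntropy φ (sourceParties A B e f) {.E, .F} -
        condMutualInfo (partyEntropy φ (sourceParties A B e f)) {.A} {.B} {.E}) ≤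
      n * (2 * QA + 2 * QB) + 6 * (1 + ε * (n * Real.logb 2 (Fintype.card (R × (A × B))))) := by
  obtain ⟨N, hN⟩ := hach ε hε
  refine ⟨N, fun n hn => ?_⟩
  obtain ⟨dCA, dWA, dCB, dWB, dWC, EA, EB, D, hEA, hEB, hD, hCA, hCB, hF⟩ := hN n hn
  rw [codeFidelity_eq_outputMatrix, outputMatrix_eq_coordMatrix] at hF
  have norm_word := dotProduct_wordVec hφ n
  have inf_word := wordSetoid_inf_wordSetoid hef n
  have wastes := mutualInfo_wastes_le hEA hEB hD norm_word inf_word (dotProduct_iidVec hφ n) hF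
  rw [logb_card_words] at wastes
  have bound_A := mutualInfo_A_le_logb_card hEA hEB norm_word inf_word wastes
  have bound_B := mutualInfo_B_le_logb_card hEA hEB norm_word inf_word wastes
  have bound_AB := sub_condMutualInfo_le_logb_card hEA hEB norm_word inf_word wastes
  simp only [mutualInfo, condMutualInfo, partyEntropy_wordVec hφ hef, Fintype.card_fin]
    at bound_A bound_B bound_AB ⊢
  refine ⟨?_, ?_, ?_⟩ <;> linarith

lemma mutualInfo_A_le_of_achievable :
    mutualInfo (partyEntropy φ (sourceParties A B e f)) {.A} {.E, .F} ≤ 2 * QA :=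
  le_of_forall_nat_mul_le fun _ hε => by
    obtain ⟨N, hN⟩ := exists_forall_nat_mul_le hφ hef hach hε
    exact ⟨N, fun n hn => (hN n hn).1⟩

lemma mutualInfo_B_le_of_achievable :
    mutualInfo (partyEntropy φ (sourceParties A B e f)) {.B} {.E, .F} ≤ 2 * QB :=
  le_of_forall_nat_mul_le fun _ hε => by
    obtain ⟨N, hN⟩ := exists_forall_nat_mul_le hφ hef hach hε
    exact ⟨N, fun n hn => (hN n hn).2.1⟩

lemma sub_condMutualInfo_le_of_achievable :
    partyEntropy φ (sourceParties A B e f) {.A} + partyEntropy φ (sourceParties A B e f) {.B} +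
        partyEntropy φ (sourceParties A B e f) {.E, .F} -
        condMutualInfo (partyEntropy φ (sourceParties A B e f)) {.A} {.B} {.E} ≤
      2 * QA + 2 * QB :=
  le_of_forall_nat_mul_le fun _ hε => by
    obtain ⟨N, hN⟩ := exists_forall_nat_mul_le hφ hef hach hε
    exact ⟨N, fun n hn => (hN n hn).2.2⟩

end SingleLetter

/-! ### Entropies of reduced states -/

lemma partyEntropy_eq_vnEntropy {ι Ω P Q : Type*} [Fintype ι] [DecidableEq ι] [Fintype Ω]
    [Fintype P] [DecidableEq P] [Fintype Q] {v : Ω → ℂ} {r : ι → Setoid Ω} {S T : Finset ι}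
    {ρ : Matrix P P ℂ} (e : Ω ≃ P × Q) (hST : Sᶜ = T)
    (hS : ∀ x y, (∀ i ∈ S, r i x y) ↔ (e x).1 = (e y).1)
    (hT : ∀ x y, (∀ i ∈ T, r i x y) ↔ (e x).2 = (e y).2)
    (hρ : ∀ p p', ρ p p' = ∑ q, v (e.symm (p, q)) * star (v (e.symm (p', q)))) :
    partyEntropy v r S = vnEntropy ρ := by
  have inf_S : S.inf r = Setoid.ker (Prod.fst ∘ e) :=
    Setoid.ext fun x y => (finset_inf_setoid_apply r S x y).trans (hS x y)
  have inf_T : T.inf r = Setoid.ker (Prod.snd ∘ e) :=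
    Setoid.ext fun x y => (finset_inf_setoid_apply r T x y).trans (hT x y)
  rw [partyEntropy, hST, inf_S, inf_T, cutEntropy_equiv, entanglementEntropy_eq_vnEntropy]
  exact congrArg vnEntropy (Matrix.ext fun p p' => (hρ p p').symm)

section SourceParties

variable {A B R : Type} (e f : Setoid R)

@[simp]
lemma sourceParties_A_iff (x y : A × (B × R)) : sourceParties A B e f .A x y ↔ x.1 = y.1 := Iff.rfl

@[simp]
lemma sourceParties_B_iff (x y : A × (B × R)) : sourceParties A B e f .B x y ↔ x.2.1 = y.2.1 :=
  Iff.rfl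

@[simp]
lemma sourceParties_E_iff (x y : A × (B × R)) :
    sourceParties A B e f .E x y ↔ e x.2.2 y.2.2 := Iff.rfl

@[simp]
lemma sourceParties_F_iff (x y : A × (B × R)) :
    sourceParties A B e f .F x y ↔ f x.2.2 y.2.2 := Iff.rfl

end SourceParties

section ReducedStates

variable {A B R : Type} [Fintype A] [Fintype B] [Fintype R] {e f : Setoid R} (hef : e ⊓ f = ⊥)
  (φ : A × (B × R) → ℂ)
include hef

lemma partyEntropy_sourceParties_A [DecidableEq A] :
    partyEntropy φ (sourceParties A B e f) {.A} = vnEntropy (redA φ) := by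
  refine partyEntropy_eq_vnEntropy (T := {.B, .E, .F}) (Equiv.refl _) (by decide)
    (by simp) (fun x y => ?_) fun _ _ => rfl
  simp [Prod.ext_iff, setoid_and_iff_eq hef]

lemma partyEntropy_sourceParties_B [DecidableEq B] :
    partyEntropy φ (sourceParties A B e f) {.B} = vnEntropy (redB φ) := by
  refine partyEntropy_eq_vnEntropy (T := {.A, .E, .F}) (prodLeftComm A B R) (by decide)
    (by simp [prodLeftComm]) (fun x y => ?_) fun b b' => ?_
  · simp [Prod.ext_iff, setoid_and_iff_eq hef, prodLeftComm]
  · rw [Fintype.sum_prod_type]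
    rfl

lemma partyEntropy_sourceParties_EF [DecidableEq R] :
    partyEntropy φ (sourceParties A B e f) {.E, .F} = vnEntropy (redR φ) := by
  refine partyEntropy_eq_vnEntropy (T := {.A, .B})
    ((Equiv.prodAssoc A B R).symm.trans (Equiv.prodComm _ _)) (by decide)
    (fun x y => ?_) (by simp [Prod.ext_iff]) fun r r' => ?_
  · simp [setoid_and_iff_eq hef]
  · rw [Fintype.sum_prod_type]
    rfl

lemma partyEntropy_sourceParties_AEF [DecidableEq A] [DecidableEq R] :
    partyEntropy φ (sourceParties A B e f) {.A, .E, .F} = vnEntropy (redAR φ) := by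
  refine partyEntropy_eq_vnEntropy (T := {.B})
    ((prodLeftComm A B R).trans (Equiv.prodComm _ _)) (by decide)
    (fun x y => ?_) (by simp [prodLeftComm]) fun _ _ => rfl
  simp [Prod.ext_iff, setoid_and_iff_eq hef, prodLeftComm]

lemma partyEntropy_sourceParties_BEF [DecidableEq B] [DecidableEq R] :
    partyEntropy φ (sourceParties A B e f) {.B, .E, .F} = vnEntropy (redBR φ) := by
  refine partyEntropy_eq_vnEntropy (T := {.A}) (Equiv.prodComm _ _) (by decide)
    (fun x y => ?_) (by simp) fun _ _ => rfl
  simp [Prod.ext_iff, setoid_and_iff_eq hef]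

lemma partyEntropy_sourceParties_EF_eq_redAB [DecidableEq A] [DecidableEq B] :
    partyEntropy φ (sourceParties A B e f) {.E, .F} = vnEntropy (redAB φ) := by
  have compl_eq : ({.E, .F}ᶜ : Finset SourceParty) = {.A, .B} := by decide
  rw [← partyEntropy_compl, compl_eq]
  refine partyEntropy_eq_vnEntropy (T := {.E, .F}) (Equiv.prodAssoc A B R).symm (by decide)
    (by simp [Prod.ext_iff]) (fun x y => ?_) fun _ _ => rfl
  simp [setoid_and_iff_eq hef]

end ReducedStates

lemma ker_fst_inf_ker_snd {E G : Type*} :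
    Setoid.ker (Prod.fst : E × G → E) ⊓ Setoid.ker (Prod.snd : E × G → G) = ⊥ :=
  eq_bot_iff.2 fun _ _ h => Prod.ext h.1 h.2

section Purification

variable {A B E G : Type}

/-- The purification, on a further system `G`, of the state `Cᴴ * C` of `A ⊗ B ⊗ E`. -/
def purification (C : Matrix G ((A × B) × E) ℂ) : A × (B × (E × G)) → ℂ :=
  fun p => star (C p.2.2.2 ((p.1, p.2.1), p.2.2.1))

variable [Fintype E] [Fintype G]

lemma redAB_purification (C : Matrix G ((A × B) × E) ℂ) (i j : A × B) :
    redAB (purification C) i j = ∑ e, (Cᴴ * C) (i, e) (j, e) := by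
  simp only [redAB, of_apply, Fintype.sum_prod_type, purification, mul_apply,
    conjTranspose_apply, star_star]

variable [Fintype A] [Fintype B]

lemma dotProduct_purification (C : Matrix G ((A × B) × E) ℂ) :
    star (purification C) ⬝ᵥ purification C = (Cᴴ * C).trace := by
  simp only [dotProduct, Pi.star_apply, purification, star_star, Matrix.trace, diag_apply,
    mul_apply, conjTranspose_apply, Fintype.sum_prod_type, mul_comm]

lemma partyEntropy_purification_E [DecidableEq E] (C : Matrix G ((A × B) × E) ℂ) :
    partyEntropy (purification C) (sourceParties A B (Setoid.ker Prod.fst) (Setoid.ker Prod.snd))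
      {.E} = vnEntropy (extRedE (Cᴴ * C)) := by
  refine partyEntropy_eq_vnEntropy (T := {.A, .B, .F}) (Q := (A × B) × G)
    ⟨fun p => (p.2.2.1, ((p.1, p.2.1), p.2.2.2)), fun p => (p.2.1.1, (p.2.1.2, (p.1, p.2.2))),
      fun _ => rfl, fun _ => rfl⟩ (by decide)
    (by simp [Setoid.ker_def]) (by simp [Setoid.ker_def, Prod.ext_iff, and_assoc]) fun i j => ?_
  rw [Fintype.sum_prod_type]
  simp [extRedE, mul_apply, purification]

lemma partyEntropy_purification_AE [DecidableEq A] [DecidableEq E]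
    (C : Matrix G ((A × B) × E) ℂ) :
    partyEntropy (purification C) (sourceParties A B (Setoid.ker Prod.fst) (Setoid.ker Prod.snd))
      {.A, .E} = vnEntropy (extRedAE (Cᴴ * C)) := by
  refine partyEntropy_eq_vnEntropy (T := {.B, .F}) (Q := B × G)
    ⟨fun p => ((p.1, p.2.2.1), (p.2.1, p.2.2.2)), fun p => (p.1.1, (p.2.1, (p.1.2, p.2.2))),
      fun _ => rfl, fun _ => rfl⟩ (by decide)
    (by simp [Setoid.ker_def]) (by simp [Setoid.ker_def]) fun i j => ?_
  rw [Fintype.sum_prod_type]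
  simp [extRedAE, mul_apply, purification]

lemma partyEntropy_purification_BE [DecidableEq B] [DecidableEq E]
    (C : Matrix G ((A × B) × E) ℂ) :
    partyEntropy (purification C) (sourceParties A B (Setoid.ker Prod.fst) (Setoid.ker Prod.snd))
      {.B, .E} = vnEntropy (extRedBE (Cᴴ * C)) := by
  refine partyEntropy_eq_vnEntropy (T := {.A, .F}) (Q := A × G)
    ⟨fun p => ((p.2.1, p.2.2.1), (p.1, p.2.2.2)), fun p => (p.2.1, (p.1.1, (p.1.2, p.2.2))),
      fun _ => rfl, fun _ => rfl⟩ (by decide)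
    (by simp [Setoid.ker_def]) (by simp [Setoid.ker_def]) fun i j => ?_
  rw [Fintype.sum_prod_type]
  simp [extRedBE, mul_apply, purification]

lemma partyEntropy_purification_ABE [DecidableEq A] [DecidableEq B] [DecidableEq E]
    (C : Matrix G ((A × B) × E) ℂ) :
    partyEntropy (purification C) (sourceParties A B (Setoid.ker Prod.fst) (Setoid.ker Prod.snd))
      {.A, .B, .E} = vnEntropy (Cᴴ * C) := by
  refine partyEntropy_eq_vnEntropy (T := {.F}) (Q := G)
    ⟨fun p => (((p.1, p.2.1), p.2.2.1), p.2.2.2), fun p => (p.1.1.1, (p.1.1.2, (p.1.2, p.2))),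
      fun _ => rfl, fun _ => rfl⟩ (by decide)
    (by simp [Setoid.ker_def, and_assoc]) (by simp [Setoid.ker_def]) fun i j => ?_
  simp [mul_apply, purification]

lemma condMutualInfo_purification [DecidableEq A] [DecidableEq B] [DecidableEq E]
    (C : Matrix G ((A × B) × E) ℂ) :
    condMutualInfo (partyEntropy (purification C)
        (sourceParties A B (Setoid.ker Prod.fst) (Setoid.ker Prod.snd))) {.A} {.B} {.E} =
      vnEntropy (extRedAE (Cᴴ * C)) + vnEntropy (extRedBE (Cᴴ * C)) - vnEntropy (Cᴴ * C) -
        vnEntropy (extRedE (Cᴴ * C)) := by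
  rw [← partyEntropy_purification_AE, ← partyEntropy_purification_BE,
    ← partyEntropy_purification_ABE, ← partyEntropy_purification_E]
  rfl

end Purification

/-! ### Extensions and squashed entanglement -/

section Extensions

variable {A B R : Type} [Fintype A] [Fintype B] [Fintype R]

omit [Fintype A] in
lemma redA_apply_eq_sum_redAB (φ : A × (B × R) → ℂ) (a a' : A) :
    redA φ a a' = ∑ b, redAB φ (a, b) (a', b) :=
  Fintype.sum_prod_type _

omit [Fintype B] in
lemma redB_apply_eq_sum_redAB (φ : A × (B × R) → ℂ) (b b' : B) :
    redB φ b b' = ∑ a, redAB φ (a, b) (a, b') := rfl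

omit [Fintype A] [Fintype B] in
lemma posSemidef_redAB [Finite A] [Finite B] (φ : A × (B × R) → ℂ) : (redAB φ).PosSemidef :=
  posSemidef_self_mul_conjTranspose (of fun (i : A × B) (r : R) => φ (i.1, (i.2, r)))

lemma trace_redAB (φ : A × (B × R) → ℂ) : (redAB φ).trace = star φ ⬝ᵥ φ := by
  simp only [Matrix.trace, diag_apply, redAB, of_apply, dotProduct, Pi.star_apply,
    Fintype.sum_prod_type, mul_comm]

variable [DecidableEq A] [DecidableEq B] [DecidableEq R]

open scoped MatrixOrder in
lemma sub_extension_le_of_achievable {E : Type} [Fintype E] [DecidableEq E]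
    {φ : A × (B × R) → ℂ} {QA QB : ℝ} (hach : achievable φ QA QB)
    {ρ : Matrix ((A × B) × E) ((A × B) × E) ℂ} (hρ : ρ.PosSemidef) (hρ1 : ρ.trace = 1)
    (hρφ : ∀ i j : A × B, ∑ e, ρ (i, e) (j, e) = redAB φ i j) :
    vnEntropy (redA φ) + vnEntropy (redB φ) + vnEntropy (redAB φ) -
        (vnEntropy (extRedAE ρ) + vnEntropy (extRedBE ρ) - vnEntropy ρ - vnEntropy (extRedE ρ)) ≤
      2 * QA + 2 * QB := by
  obtain ⟨C, rfl⟩ : ∃ C : Matrix ((A × B) × E) ((A × B) × E) ℂ, ρ = Cᴴ * C :=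
    CStarAlgebra.nonneg_iff_eq_star_mul_self.1 hρ.nonneg
  have redAB_eq : redAB φ = redAB (purification C) :=
    Matrix.ext fun i j => (hρφ i j).symm.trans (redAB_purification C i j).symm
  have redA_eq : redA φ = redA (purification C) :=
    Matrix.ext fun a a' => by
      rw [redA_apply_eq_sum_redAB, redA_apply_eq_sum_redAB, redAB_eq]
  have redB_eq : redB φ = redB (purification C) :=
    Matrix.ext fun b b' => by
      rw [redB_apply_eq_sum_redAB, redB_apply_eq_sum_redAB, redAB_eq]
  have bound := sub_condMutualInfo_le_of_achievable ((dotProduct_purification C).trans hρ1)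
    ker_fst_inf_ker_snd (achievable_of_redAB_eq redAB_eq hach)
  rwa [partyEntropy_sourceParties_A ker_fst_inf_ker_snd,
    partyEntropy_sourceParties_B ker_fst_inf_ker_snd,
    partyEntropy_sourceParties_EF_eq_redAB ker_fst_inf_ker_snd, ← redA_eq, ← redB_eq, ← redAB_eq,
    condMutualInfo_purification] at bound

lemma le_squashedEntanglement {σ : Matrix (A × B) (A × B) ℂ} (hσ : σ.PosSemidef)
    (hσ1 : σ.trace = 1) {c : ℝ}
    (hc : ∀ (d : ℕ) (ρ : Matrix ((A × B) × Fin d) ((A × B) × Fin d) ℂ), ρ.PosSemidef →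
      ρ.trace = 1 → (∀ i j, ∑ e, ρ (i, e) (j, e) = σ i j) →
      c ≤ 1 / 2 * (vnEntropy (extRedAE ρ) + vnEntropy (extRedBE ρ) - vnEntropy ρ -
        vnEntropy (extRedE ρ))) :
    c ≤ squashedEntanglement σ := by
  refine le_csInf ⟨_, 1, σ.submatrix Prod.fst Prod.fst, hσ.submatrix _, ?_, by simp, rfl⟩ ?_
  · rw [← hσ1]
    simp [Matrix.trace, Fintype.sum_prod_type]
  · rintro _ ⟨d, ρ, hρ, hρ1, hρσ, rfl⟩
    exact hc d ρ hρ hρ1 hρσ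

end Extensions

/-- **Theorem 6: outer bound for fully quantum distributed compression.**  If a rate pair
`(Q_A, Q_B)` of nonnegative reals is achievable for the source `φ^{ABR}`, then
`Q_A ≥ ½I(A;R)`, `Q_B ≥ ½I(B;R)` and `Q_A + Q_B ≥ ½J(A;B) − E_sq(φ^{AB})`, where
`J(A;B) = H(A) + H(B) + H(AB)`. -/
theorem distributed_compression_outer_bound
    {ιA ιB ιR : Type} [Fintype ιA] [DecidableEq ιA] [Fintype ιB] [DecidableEq ιB]
    [Fintype ιR] [DecidableEq ιR]
    (φ : ιA × (ιB × ιR) → ℂ) (hφ : star φ ⬝ᵥ φ = 1)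
    (QA QB : ℝ) (hQA0 : 0 ≤ QA) (hQB0 : 0 ≤ QB)
    (hach : achievable φ QA QB) :
    QA ≥ (1/2) * (vnEntropy (redA φ) + vnEntropy (redR φ) - vnEntropy (redAR φ))
    ∧ QB ≥ (1/2) * (vnEntropy (redB φ) + vnEntropy (redR φ) - vnEntropy (redBR φ))
    ∧ QA + QB ≥
        (1/2) * (vnEntropy (redA φ) + vnEntropy (redB φ) + vnEntropy (redAB φ))
          - squashedEntanglement (redAB φ) := by
  have hef : (⊥ : Setoid ιR) ⊓ ⊤ = ⊥ := bot_inf_eq _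
  have rate_A : vnEntropy (redA φ) + vnEntropy (redR φ) - vnEntropy (redAR φ) ≤ 2 * QA := by
    rw [← partyEntropy_sourceParties_A hef, ← partyEntropy_sourceParties_EF hef,
      ← partyEntropy_sourceParties_AEF hef]
    exact mutualInfo_A_le_of_achievable hφ hef hach
  have rate_B : vnEntropy (redB φ) + vnEntropy (redR φ) - vnEntropy (redBR φ) ≤ 2 * QB := by
    rw [← partyEntropy_sourceParties_B hef, ← partyEntropy_sourceParties_EF hef,
      ← partyEntropy_sourceParties_BEF hef]
    exact mutualInfo_B_le_of_achievable hφ hef hach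
  have rate_sum : 1 / 2 * (vnEntropy (redA φ) + vnEntropy (redB φ) + vnEntropy (redAB φ)) -
      (QA + QB) ≤ squashedEntanglement (redAB φ) :=
    le_squashedEntanglement (posSemidef_redAB φ) ((trace_redAB φ).trans hφ)
      fun d ρ hρ hρ1 hρφ => by
        linarith only [sub_extension_le_of_achievable hach hρ hρ1 hρφ]
  exact ⟨by linarith only [rate_A], by linarith only [rate_B], by linarith only [rate_sum]⟩
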